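/- Let N ≥ 2, let B ⊂ ℝ^N be a bounded radial domain, let 𝓑 ⊂ ℝ × ℝ^N × ℝ^{N×N} be open convex with (0,0,0) ∈ 𝓑, and let F : [0,∞) × B̄ × 𝓑 → ℝ satisfy the hypotheses (F1)–(F4). Let u ∈ C^{2,1}(B × (0,∞)) ∩ C(B̄ × [0,∞)) be a classical solution of u_t = F(t,x,u,∇u,D²u) in B × (0,∞), u = 0 on ∂B × (0,∞), with sup_{t≥0} ‖u(·,t)‖_{L^∞(B)} < ∞. Define 𝓜 = {e ∈ S : z(x) ≥ z(σ_e(x)) for all x ∈ B(e) and all z ∈ ω(u)}. Let e ∈ 𝓜 and suppose there is z̃ ∈ ω(u) such that z̃ − z̃ ∘ σ_e ≢ 0 on B(e). Then there is ε > 0 such that e' ∈ 𝓜 for all e' ∈ S with |e' − e| < ε. -/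

import Mathlib

/-!
The proof replaces Harnack-type estimates by explicit barriers and a comparison principle for the
reflected differences `w_e(x,t) = u(x,t) - u(σ_e x, t)` on the closed half domain.

* Comparison (`comparison_of_solution`). At a first touching point of a barrier `v` with `w_e` the
  gradients agree and the Hessian of `w_e - v` is nonnegative, while reflection invariance lets both
  `u` and `u ∘ σ_e` solve the same equation. Integrating along the segment between their jets
  (`increment_ge`) bounds the increment of `F` below by `A(D²v) - L max(|v|, |∇v|)` for a suitable
  elliptic functional `A`, so a barrier that is a strict subsolution for all such `A` cannot touch.

* Static barrier (`exists_staticBarrier`). With a defining function `q` of `B`, the function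
  `Φ_e = ((x·e) q)ᵐ` is for large `m` a subsolution up to a multiple of itself, and
  `ψ_e = 3 - exp(-β x·e) - exp(-β q)` is a strict supersolution near the boundary of the half domain
  for large `β`. For suitable `δ` and `γ`, independent of the direction, `exp(-γ t)(Φ_e - δ ψ_e)` is
  a strict subsolution that is negative on the boundary of the half domain.

* Spreading of positivity (`posAt_spread`). Along times `tₙ` with `u(·,tₙ) → z̃` the function `w_e`
  is asymptotically nonnegative and positive near one point. A travelling bump
  (`transport_positivity`) carries the positivity along segments, and the half domain is connected.

At some time `t₀` the function `w_e` therefore exceeds `μ (Φ_e - δ ψ_e)` strictly on the compact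
half domain (`exists_above_barrier`). This persists for directions `e'` near `e`
(`above_barrier_stable`), and comparison with the decaying barrier gives
`w_{e'} ≥ -3 μ δ exp(-γ (t - t₀))`, so every limit profile satisfies `z ≥ z ∘ σ_{e'}` on `B(e')`
(`mem_omegaReflSet_of_above`).
-/

open Set Metric Filter
open scoped RealInnerProductSpace

noncomputable section

variable {N : ℕ}

/-- Reflection through the hyperplane `H(e) = {x : ⟪x,e⟫ = 0}`:
`σ_e(x) = x - 2 (x·e) e`. -/
def reflHyp (e x : EuclideanSpace ℝ (Fin N)) : EuclideanSpace ℝ (Fin N) :=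
  x - (2 * ⟪x, e⟫) • e

/-- The half domain `B(e) = {x ∈ B : x·e > 0}`. -/
def halfDom (B : Set (EuclideanSpace ℝ (Fin N))) (e : EuclideanSpace ℝ (Fin N)) :
    Set (EuclideanSpace ℝ (Fin N)) := {x ∈ B | 0 < ⟪x, e⟫}

/-- A (bounded) radial domain: an open ball or an open annulus centered at the origin. -/
def IsRadialDomain (B : Set (EuclideanSpace ℝ (Fin N))) : Prop :=
  (∃ R, 0 < R ∧ B = Metric.ball 0 R) ∨
  (∃ r R, 0 < r ∧ r < R ∧ B = {x : EuclideanSpace ℝ (Fin N) | r < ‖x‖ ∧ ‖x‖ < R})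

/-- `u` is foliated Schwarz symmetric on `D` with respect to the unit vector `p`:
`u(x) ≥ u(y)` whenever `|x| = |y|` and `x·p ≥ y·p`.  (This is equivalent to axial
symmetry with respect to `ℝp` together with monotonicity in the polar angle.) -/
def FoliatedSchwarzOn (D : Set (EuclideanSpace ℝ (Fin N)))
    (u : EuclideanSpace ℝ (Fin N) → ℝ) (p : EuclideanSpace ℝ (Fin N)) : Prop :=
  ∀ x ∈ D, ∀ y ∈ D, ‖x‖ = ‖y‖ → ⟪y, p⟫ ≤ ⟪x, p⟫ → u y ≤ u x

/-- The omega limit set of a (bounded) solution `u = u(x,t)`: all continuous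
functions `z` on `B̄` which are uniform limits on `B̄` of `u(·, tₙ)` for some
sequence `tₙ → ∞`. -/
def omegaLimitSet (B : Set (EuclideanSpace ℝ (Fin N)))
    (u : EuclideanSpace ℝ (Fin N) → ℝ → ℝ) : Set (EuclideanSpace ℝ (Fin N) → ℝ) :=
  {z | ContinuousOn z (closure B) ∧ ∃ t : ℕ → ℝ, Tendsto t atTop atTop ∧
    ∀ ε > 0, ∃ n₀ : ℕ, ∀ n ≥ n₀, ∀ x ∈ closure B, |u x (t n) - z x| ≤ ε}

/-- The matrix of the reflection through the hyperplane orthogonal to `e`: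
`R_{ij} = δ_{ij} − 2 eᵢ eⱼ`. -/
def reflMat (e : EuclideanSpace ℝ (Fin N)) : Fin N → Fin N → ℝ :=
  fun i j => (if i = j then (1:ℝ) else 0) - 2 * e i * e j

/-- The conjugation `R q R` of a matrix `q` by a (symmetric) matrix `R`. -/
def matConj (R q : Fin N → Fin N → ℝ) : Fin N → Fin N → ℝ :=
  fun i j => ∑ k, ∑ l, R i k * q k l * R l j

/-- The gradient vector `∇u ∈ ℝᴺ` associated with a differential `Du`. -/
def gradVec (Du : EuclideanSpace ℝ (Fin N) →L[ℝ] ℝ) : EuclideanSpace ℝ (Fin N) :=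
  (EuclideanSpace.equiv (Fin N) ℝ).symm (fun i => Du (EuclideanSpace.single i 1))

/-- The Hessian matrix `D²u = (u_{xᵢxⱼ})` associated with a second differential. -/
def hessMat (D2 : EuclideanSpace ℝ (Fin N) →L[ℝ] EuclideanSpace ℝ (Fin N) →L[ℝ] ℝ) :
    Fin N → Fin N → ℝ :=
  fun i j => D2 (EuclideanSpace.single i 1) (EuclideanSpace.single j 1)

/-- The set `𝓜 = {e ∈ S : z ≥ z ∘ σ_e on B(e) for all z ∈ ω(u)}`. -/
def omegaReflSet (B : Set (EuclideanSpace ℝ (Fin N)))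
    (u : EuclideanSpace ℝ (Fin N) → ℝ → ℝ) : Set (EuclideanSpace ℝ (Fin N)) :=
  {e | ‖e‖ = 1 ∧ ∀ z ∈ omegaLimitSet B u, ∀ x ∈ halfDom B e, z (reflHyp e x) ≤ z x}

section Helpers

open Topology

/-- The quadratic form `∑ qᵢⱼ ξᵢ ξⱼ` of a matrix. -/
def quadForm (q : Fin N → Fin N → ℝ) (ξ : EuclideanSpace ℝ (Fin N)) : ℝ :=
  ∑ i, ∑ j, q i j * (ξ i * ξ j)

/-- The rank-one matrix `a ⊗ a`. -/
def outerSq (a : EuclideanSpace ℝ (Fin N)) : Fin N → Fin N → ℝ := fun i j => a i * a j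

lemma quadForm_add (q q' : Fin N → Fin N → ℝ) (ξ : EuclideanSpace ℝ (Fin N)) :
    quadForm (q + q') ξ = quadForm q ξ + quadForm q' ξ := by
  simp [quadForm, add_mul, Finset.sum_add_distrib]

lemma quadForm_smul (c : ℝ) (q : Fin N → Fin N → ℝ) (ξ : EuclideanSpace ℝ (Fin N)) :
    quadForm (c • q) ξ = c * quadForm q ξ := by
  simp [quadForm, Finset.mul_sum, mul_assoc]

lemma euclid_inner (a b : EuclideanSpace ℝ (Fin N)) : ⟪a, b⟫ = ∑ i, a i * b i := by
  simp [PiLp.inner_apply, mul_comm]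

lemma quadForm_outerSq (a ξ : EuclideanSpace ℝ (Fin N)) :
    quadForm (outerSq a) ξ = ⟪a, ξ⟫ ^ 2 := by
  rw [euclid_inner, sq, Finset.sum_mul_sum]
  simp only [quadForm, outerSq]
  exact Finset.sum_congr rfl fun i _ => Finset.sum_congr rfl fun j _ => by ring

/-- `HasJet f x p Q`: the restriction of `f` to every line through `x` is twice differentiable
at `x`, with first derivative `⟪p, ξ⟫` and second derivative `Q(ξ, ξ)` in direction `ξ`, where
`Q` is symmetric.  Only directional information is recorded: this is all that the derivative
tests at an interior minimum use. -/
def HasJet (f : EuclideanSpace ℝ (Fin N) → ℝ) (x p : EuclideanSpace ℝ (Fin N))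
    (Q : Fin N → Fin N → ℝ) : Prop :=
  (∀ i j, Q i j = Q j i) ∧ ∀ ξ : EuclideanSpace ℝ (Fin N), ∃ d : ℝ → ℝ,
    (∀ᶠ s in 𝓝 (0:ℝ), HasDerivAt (fun s : ℝ => f (x + s • ξ)) (d s) s) ∧
    d 0 = ⟪p, ξ⟫ ∧ HasDerivAt d (quadForm Q ξ) 0

lemma HasJet.add {f g : EuclideanSpace ℝ (Fin N) → ℝ} {x p p' : EuclideanSpace ℝ (Fin N)}
    {Q Q' : Fin N → Fin N → ℝ} (hf : HasJet f x p Q) (hg : HasJet g x p' Q') :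
    HasJet (fun y => f y + g y) x (p + p') (Q + Q') := by
  refine ⟨fun i j => by simp [hf.1 i j, hg.1 i j], fun ξ => ?_⟩
  obtain ⟨d, h1, h2, h3⟩ := hf.2 ξ
  obtain ⟨d', h1', h2', h3'⟩ := hg.2 ξ
  refine ⟨fun s => d s + d' s, ?_, ?_, ?_⟩
  · filter_upwards [h1, h1'] with s a b using a.add b
  · simp [h2, h2', inner_add_left]
  · rw [quadForm_add]; exact h3.add h3'

lemma HasJet.const (c : ℝ) (x : EuclideanSpace ℝ (Fin N)) :
    HasJet (fun _ => c) x 0 0 := by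
  refine ⟨fun i j => rfl, fun ξ => ⟨fun _ => 0, ?_, by simp, ?_⟩⟩
  · exact Eventually.of_forall fun s => hasDerivAt_const _ _
  · simpa [quadForm] using hasDerivAt_const (0:ℝ) (0:ℝ)

lemma HasJet.congr {f g : EuclideanSpace ℝ (Fin N) → ℝ} {x p : EuclideanSpace ℝ (Fin N)}
    {Q : Fin N → Fin N → ℝ} (hf : HasJet f x p Q) (h : g =ᶠ[𝓝 x] f) : HasJet g x p Q := by
  refine ⟨hf.1, fun ξ => ?_⟩
  obtain ⟨d, h1, h2, h3⟩ := hf.2 ξ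
  refine ⟨d, ?_, h2, h3⟩
  have hc : Tendsto (fun s : ℝ => x + s • ξ) (𝓝 0) (𝓝 x) := by
    have : Continuous (fun s : ℝ => x + s • ξ) := by fun_prop
    simpa using this.tendsto 0
  have h' := (hc.eventually h).eventually_nhds
  filter_upwards [h1, h'] with s a b
  exact a.congr_of_eventuallyEq b

/-- Chain rule for jets, with an outer function of one real variable. -/
lemma HasJet.comp {f : EuclideanSpace ℝ (Fin N) → ℝ} {x p : EuclideanSpace ℝ (Fin N)}
    {Q : Fin N → Fin N → ℝ} (hf : HasJet f x p Q) {h h' : ℝ → ℝ} {h'' : ℝ}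
    (h1 : ∀ᶠ s in 𝓝 (f x), HasDerivAt h (h' s) s) (h2 : HasDerivAt h' h'' (f x)) :
    HasJet (fun y => h (f y)) x (h' (f x) • p) (h' (f x) • Q + h'' • outerSq p) := by
  refine ⟨fun i j => by simp [hf.1 i j, outerSq, mul_comm], fun ξ => ?_⟩
  obtain ⟨d, d1, d2, d3⟩ := hf.2 ξ
  refine ⟨fun s => h' (f (x + s • ξ)) * d s, ?_, ?_, ?_⟩
  · have hc : Tendsto (fun s : ℝ => f (x + s • ξ)) (𝓝 0) (𝓝 (f x)) := by
      simpa [ContinuousAt] using d1.self_of_nhds.continuousAt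
    filter_upwards [d1, hc.eventually h1] with s a b using b.comp s a
  · simp [d2, inner_smul_left]
  · have e0 : f (x + (0:ℝ) • ξ) = f x := by simp
    have h2' : HasDerivAt h' h'' (f (x + (0:ℝ) • ξ)) := by rwa [e0]
    have := (h2'.comp (0:ℝ) d1.self_of_nhds).mul d3
    refine this.congr_deriv ?_
    rw [quadForm_add, quadForm_smul, quadForm_smul, quadForm_outerSq]
    simp only [Function.comp, e0, d2]; ring

lemma HasJet.smul {f : EuclideanSpace ℝ (Fin N) → ℝ} {x p : EuclideanSpace ℝ (Fin N)}
    {Q : Fin N → Fin N → ℝ} (hf : HasJet f x p Q) (c : ℝ) :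
    HasJet (fun y => c * f y) x (c • p) (c • Q) := by
  have := hf.comp (h := fun s => c * s) (h' := fun _ => c) (h'' := 0)
    (Eventually.of_forall fun s => by simpa using (hasDerivAt_id s).const_mul c)
    (hasDerivAt_const _ _)
  simpa using this

lemma HasJet.inner_right (e x : EuclideanSpace ℝ (Fin N)) :
    HasJet (fun y => ⟪y, e⟫) x e 0 := by
  refine ⟨fun i j => rfl, fun ξ => ⟨fun _ => ⟪e, ξ⟫, ?_, rfl, ?_⟩⟩
  · refine Eventually.of_forall fun s => ?_
    have h : (fun s : ℝ => ⟪x + s • ξ, e⟫) = fun s : ℝ => ⟪x, e⟫ + s * ⟪e, ξ⟫ := by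
      funext s; rw [inner_add_left, inner_smul_left, real_inner_comm ξ e]; simp
    rw [h]
    simpa using ((hasDerivAt_id s).mul_const ⟪e, ξ⟫).const_add ⟪x, e⟫
  · simpa [quadForm] using hasDerivAt_const (0:ℝ) ⟪e, ξ⟫

/-- The identity matrix. -/
def idMat : Fin N → Fin N → ℝ := fun i j => if i = j then 1 else 0

lemma quadForm_idMat (ξ : EuclideanSpace ℝ (Fin N)) : quadForm idMat ξ = ‖ξ‖ ^ 2 := by
  rw [← real_inner_self_eq_norm_sq, euclid_inner]
  simp [quadForm, idMat]

lemma HasJet.dist_sq (y x : EuclideanSpace ℝ (Fin N)) :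
    HasJet (fun z => ‖z - y‖ ^ 2) x ((2:ℝ) • (x - y)) ((2:ℝ) • idMat) := by
  refine ⟨fun i j => by simp [idMat, eq_comm], fun ξ =>
    ⟨fun s => 2 * ⟪x - y, ξ⟫ + s * (2 * ‖ξ‖ ^ 2), ?_, by simp [inner_smul_left], ?_⟩⟩
  · refine Eventually.of_forall fun s => ?_
    have h : (fun s : ℝ => ‖x + s • ξ - y‖ ^ 2) = fun s : ℝ =>
        ‖x - y‖ ^ 2 + s * (2 * ⟪x - y, ξ⟫) + s ^ 2 * ‖ξ‖ ^ 2 := by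
      funext s
      rw [show x + s • ξ - y = (x - y) + s • ξ by abel, norm_add_sq_real, inner_smul_right,
        norm_smul, mul_pow, Real.norm_eq_abs, sq_abs]
      ring
    rw [h]
    have := (((hasDerivAt_id s).mul_const (2 * ⟪x - y, ξ⟫)).const_add (‖x - y‖ ^ 2)).add
      (((hasDerivAt_id s).pow 2).mul_const (‖ξ‖ ^ 2))
    refine this.congr_deriv ?_
    simp; ring
  · rw [quadForm_smul, quadForm_idMat]
    simpa using ((hasDerivAt_id (0:ℝ)).mul_const (2 * ‖ξ‖ ^ 2)).const_add (2 * ⟪x - y, ξ⟫)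

/-! ### Reflections -/

lemma reflHyp_add_smul (e x ξ : EuclideanSpace ℝ (Fin N)) (s : ℝ) :
    reflHyp e (x + s • ξ) = reflHyp e x + s • reflHyp e ξ := by
  simp only [reflHyp, inner_add_left, inner_smul_left, smul_sub, smul_smul]
  simp only [conj_trivial]
  rw [show 2 * (⟪x, e⟫ + s * ⟪ξ, e⟫) = 2 * ⟪x, e⟫ + s * (2 * ⟪ξ, e⟫) by ring, add_smul]
  abel

lemma reflHyp_inner_left (e x ξ : EuclideanSpace ℝ (Fin N)) :
    ⟪x, reflHyp e ξ⟫ = ⟪reflHyp e x, ξ⟫ := by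
  simp only [reflHyp, inner_sub_right, inner_sub_left, inner_smul_left, inner_smul_right,
    conj_trivial]
  rw [real_inner_comm e ξ]; ring

lemma inner_reflHyp {e : EuclideanSpace ℝ (Fin N)} (he : ‖e‖ = 1)
    (x : EuclideanSpace ℝ (Fin N)) : ⟪reflHyp e x, e⟫ = -⟪x, e⟫ := by
  simp only [reflHyp, inner_sub_left, inner_smul_left, conj_trivial,
    real_inner_self_eq_norm_sq, he]; ring

lemma reflHyp_reflHyp {e : EuclideanSpace ℝ (Fin N)} (he : ‖e‖ = 1)
    (x : EuclideanSpace ℝ (Fin N)) : reflHyp e (reflHyp e x) = x := by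
  rw [reflHyp, inner_reflHyp he, reflHyp]; module

lemma norm_reflHyp {e : EuclideanSpace ℝ (Fin N)} (he : ‖e‖ = 1)
    (x : EuclideanSpace ℝ (Fin N)) : ‖reflHyp e x‖ = ‖x‖ := by
  have : ‖reflHyp e x‖ ^ 2 = ‖x‖ ^ 2 := by
    rw [← real_inner_self_eq_norm_sq, reflHyp_inner_left, reflHyp_reflHyp he,
      real_inner_self_eq_norm_sq]
  exact (sq_eq_sq₀ (norm_nonneg _) (norm_nonneg _)).1 this

lemma reflMat_sum (e ξ : EuclideanSpace ℝ (Fin N)) (k : Fin N) :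
    ∑ i, reflMat e k i * ξ i = reflHyp e ξ k := by
  simp only [reflMat, sub_mul, Finset.sum_sub_distrib, reflHyp, euclid_inner]
  simp only [ite_mul, one_mul, zero_mul, Finset.sum_ite_eq, Finset.mem_univ, if_true,
    PiLp.sub_apply, PiLp.smul_apply, smul_eq_mul, Finset.mul_sum, Finset.sum_mul]
  congr 1
  exact Finset.sum_congr rfl fun i _ => by ring

lemma reflMat_symm (e : EuclideanSpace ℝ (Fin N)) (i j : Fin N) :
    reflMat e i j = reflMat e j i := by
  simp only [reflMat, eq_comm (a := i)]; ring

lemma quadForm_matConj (e ξ : EuclideanSpace ℝ (Fin N)) (q : Fin N → Fin N → ℝ) :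
    quadForm (matConj (reflMat e) q) ξ = quadForm q (reflHyp e ξ) := by
  simp only [quadForm, matConj, ← reflMat_sum, Finset.mul_sum,
    Finset.sum_mul]
  calc _ = ∑ i, ∑ k, ∑ j, ∑ l, reflMat e i k * q k l * reflMat e l j * (ξ i * ξ j) :=
        Finset.sum_congr rfl fun i _ => Finset.sum_comm
    _ = ∑ k, ∑ i, ∑ j, ∑ l, reflMat e i k * q k l * reflMat e l j * (ξ i * ξ j) :=
        Finset.sum_comm
    _ = ∑ k, ∑ i, ∑ l, ∑ j, reflMat e i k * q k l * reflMat e l j * (ξ i * ξ j) :=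
        Finset.sum_congr rfl fun k _ => Finset.sum_congr rfl fun i _ => Finset.sum_comm
    _ = ∑ k, ∑ l, ∑ i, ∑ j, reflMat e i k * q k l * reflMat e l j * (ξ i * ξ j) :=
        Finset.sum_congr rfl fun k _ => Finset.sum_comm
    _ = ∑ k, ∑ l, ∑ j, ∑ i, reflMat e i k * q k l * reflMat e l j * (ξ i * ξ j) :=
        Finset.sum_congr rfl fun k _ => Finset.sum_congr rfl fun l _ => Finset.sum_comm
    _ = _ := Finset.sum_congr rfl fun k _ => Finset.sum_congr rfl fun l _ =>
        Finset.sum_congr rfl fun i _ => Finset.sum_congr rfl fun j _ => by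
          rw [reflMat_symm e j k]; ring

lemma matConj_symm (e : EuclideanSpace ℝ (Fin N)) {q : Fin N → Fin N → ℝ}
    (hq : ∀ i j, q i j = q j i) (i j : Fin N) :
    matConj (reflMat e) q i j = matConj (reflMat e) q j i := by
  simp only [matConj]
  rw [Finset.sum_comm]
  refine Finset.sum_congr rfl fun l _ => Finset.sum_congr rfl fun k _ => ?_
  rw [reflMat_symm e i k, reflMat_symm e l j, hq k l]; ring

lemma HasJet.reflHyp {f : EuclideanSpace ℝ (Fin N) → ℝ} {e x p : EuclideanSpace ℝ (Fin N)}
    {Q : Fin N → Fin N → ℝ} (hf : HasJet f (reflHyp e x) p Q) :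
    HasJet (fun y => f (_root_.reflHyp e y)) x (_root_.reflHyp e p) (matConj (reflMat e) Q) := by
  refine ⟨matConj_symm e hf.1, fun ξ => ?_⟩
  obtain ⟨d, h1, h2, h3⟩ := hf.2 (_root_.reflHyp e ξ)
  refine ⟨d, ?_, ?_, ?_⟩
  · filter_upwards [h1] with s hs
    simpa only [reflHyp_add_smul] using hs
  · rw [h2, reflHyp_inner_left]
  · rwa [quadForm_matConj]

lemma inner_gradVec (D : EuclideanSpace ℝ (Fin N) →L[ℝ] ℝ) (ξ : EuclideanSpace ℝ (Fin N)) :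
    ⟪gradVec D, ξ⟫ = D ξ := by
  have hξ : ξ = ∑ i, ξ i • EuclideanSpace.single i (1:ℝ) := by
    ext j; simp [Finset.sum_apply, Pi.single_apply]
  conv_rhs => rw [hξ]
  rw [map_sum, euclid_inner]
  refine Finset.sum_congr rfl fun i _ => ?_
  simp [gradVec, mul_comm]

lemma quadForm_hessMat
    (D : EuclideanSpace ℝ (Fin N) →L[ℝ] EuclideanSpace ℝ (Fin N) →L[ℝ] ℝ)
    (ξ : EuclideanSpace ℝ (Fin N)) : quadForm (hessMat D) ξ = D ξ ξ := by
  have hξ : ξ = ∑ i, ξ i • EuclideanSpace.single i (1:ℝ) := by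
    ext j; simp [Finset.sum_apply, Pi.single_apply]
  conv_rhs => rw [hξ]
  simp only [map_sum, map_smul, sum_apply, smul_apply,
    quadForm, hessMat, smul_eq_mul, Finset.mul_sum]
  rw [Finset.sum_comm]
  exact Finset.sum_congr rfl fun i _ => Finset.sum_congr rfl fun j _ => by ring

lemma HasJet.of_hasFDerivAt {f : EuclideanSpace ℝ (Fin N) → ℝ}
    {D1 : EuclideanSpace ℝ (Fin N) → (EuclideanSpace ℝ (Fin N) →L[ℝ] ℝ)}
    {D2 : EuclideanSpace ℝ (Fin N) →L[ℝ] EuclideanSpace ℝ (Fin N) →L[ℝ] ℝ}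
    {x : EuclideanSpace ℝ (Fin N)} (h1 : ∀ᶠ y in 𝓝 x, HasFDerivAt f (D1 y) y)
    (h2 : HasFDerivAt D1 D2 x) : HasJet f x (gradVec (D1 x)) (hessMat D2) := by
  refine ⟨fun i j => second_derivative_symmetric_of_eventually (𝕜 := ℝ) h1 h2 _ _, fun ξ => ?_⟩
  have hl : ∀ s : ℝ, HasDerivAt (fun s : ℝ => x + s • ξ) ξ s := fun s => by
    simpa using ((hasDerivAt_id s).smul_const ξ).const_add x
  have hc : Tendsto (fun s : ℝ => x + s • ξ) (𝓝 0) (𝓝 x) := by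
    simpa using (hl 0).continuousAt.tendsto
  refine ⟨fun s => D1 (x + s • ξ) ξ, ?_, ?_, ?_⟩
  · filter_upwards [hc.eventually h1] with s hs using hs.comp_hasDerivAt s (hl s)
  · simp [inner_gradVec]
  · rw [quadForm_hessMat]
    have h2' : HasFDerivAt D1 D2 (x + (0:ℝ) • ξ) := by simpa using h2
    have h3 := h2'.comp_hasDerivAt (0:ℝ) (hl 0)
    exact (ContinuousLinearMap.apply ℝ ℝ ξ).hasFDerivAt.comp_hasDerivAt (0:ℝ) h3

/-- First and second derivative tests for jets. -/
lemma HasJet.localMin {f : EuclideanSpace ℝ (Fin N) → ℝ} {x p : EuclideanSpace ℝ (Fin N)}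
    {Q : Fin N → Fin N → ℝ} (hf : HasJet f x p Q) (hmin : IsLocalMin f x) :
    p = 0 ∧ ∀ ξ, 0 ≤ quadForm Q ξ := by
  have hm : ∀ ξ : EuclideanSpace ℝ (Fin N), IsLocalMin (fun s : ℝ => f (x + s • ξ)) 0 := by
    intro ξ
    have hc : Tendsto (fun s : ℝ => x + s • ξ) (𝓝 0) (𝓝 x) := by
      have : Continuous (fun s : ℝ => x + s • ξ) := by fun_prop
      simpa using this.tendsto 0
    filter_upwards [hc.eventually hmin] with s hs
    simpa using hs
  have hp : ∀ ξ, ⟪p, ξ⟫ = 0 := by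
    intro ξ
    obtain ⟨d, h1, h2, -⟩ := hf.2 ξ
    rw [← h2]
    exact (hm ξ).hasDerivAt_eq_zero h1.self_of_nhds
  refine ⟨inner_self_eq_zero.1 (hp p), fun ξ => ?_⟩
  obtain ⟨d, h1, h2, h3⟩ := hf.2 ξ
  by_contra hneg
  push Not at hneg
  rw [hp ξ] at h2
  -- a negative second derivative makes the first one negative just to the right of `0`
  have h4 : ∀ᶠ s in 𝓝[>] (0:ℝ), d s < 0 := by
    have h5 := (hasDerivAt_iff_tendsto_slope.1 h3).eventually (gt_mem_nhds hneg)
    have h6 : ∀ᶠ s in 𝓝[>] (0:ℝ), slope d 0 s < 0 :=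
      h5.filter_mono (nhdsWithin_mono _ fun s hs => ne_of_gt hs)
    filter_upwards [h6, self_mem_nhdsWithin] with s hs hs0
    rw [slope_def_field, h2, sub_zero, sub_zero] at hs
    by_contra hd
    push Not at hd
    exact absurd hs (not_lt.2 (div_nonneg hd (le_of_lt hs0)))
  have h7 : ∀ᶠ s in 𝓝[>] (0:ℝ), HasDerivAt (fun s : ℝ => f (x + s • ξ)) (d s) s :=
    h1.filter_mono nhdsWithin_le_nhds
  have h8 : ∀ᶠ s in 𝓝[>] (0:ℝ), f (x + (0:ℝ) • ξ) ≤ f (x + s • ξ) :=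
    (hm ξ).filter_mono nhdsWithin_le_nhds
  obtain ⟨r, hr, hsub⟩ := (mem_nhdsGT_iff_exists_Ioo_subset).1 (h4.and (h7.and h8))
  have hr' : (0:ℝ) < r := hr
  obtain ⟨c, hc, hce⟩ := exists_hasDerivAt_eq_slope (fun s : ℝ => f (x + s • ξ)) d
    (half_pos hr') (fun s hs => by
      rcases eq_or_lt_of_le hs.1 with h | h
      · rw [← h]; exact h1.self_of_nhds.continuousAt.continuousWithinAt
      · exact (hsub ⟨h, by linarith [hs.2]⟩).2.1.continuousAt.continuousWithinAt)
    (fun s hs => (hsub ⟨hs.1, by linarith [hs.2]⟩).2.1)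
  have hdc : d c < 0 := (hsub ⟨hc.1, by linarith [hc.2]⟩).1
  have h9 := (hsub ⟨half_pos hr', by linarith⟩).2.2
  rw [hce] at hdc
  exact absurd hdc (not_lt.2 (div_nonneg (by simpa using h9) (by linarith)))

/-! ### Uniformly elliptic functionals -/

/-- The class of linear functionals on matrices with ellipticity constant `α₀` and norm at most
`L`.  It contains every `∂_q F`, and stands for the coefficient matrices `(aᵢⱼ)` of the
linearized equation. -/
def IsEll (L α₀ : ℝ) (A : (Fin N → Fin N → ℝ) →L[ℝ] ℝ) : Prop :=
  (∀ q, |A q| ≤ L * ‖q‖) ∧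
    ∀ ξ : Fin N → ℝ, α₀ * ∑ i, ξ i ^ 2 ≤ A (fun i j => ξ i * ξ j)

lemma norm_outerSq_le (a : EuclideanSpace ℝ (Fin N)) : ‖outerSq a‖ ≤ ‖a‖ ^ 2 := by
  refine (pi_norm_le_iff_of_nonneg (by positivity)).2 fun i =>
    (pi_norm_le_iff_of_nonneg (by positivity)).2 fun j => ?_
  rw [outerSq, norm_mul, sq]
  exact mul_le_mul (PiLp.norm_apply_le a i) (PiLp.norm_apply_le a j) (norm_nonneg _)
    (norm_nonneg _)

lemma norm_idMat_le : ‖(idMat : Fin N → Fin N → ℝ)‖ ≤ 1 := by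
  refine (pi_norm_le_iff_of_nonneg (by positivity)).2 fun i =>
    (pi_norm_le_iff_of_nonneg (by positivity)).2 fun j => ?_
  rw [idMat]; split_ifs <;> simp

lemma IsEll.outer_ge {L α₀ : ℝ} {A : (Fin N → Fin N → ℝ) →L[ℝ] ℝ} (hA : IsEll L α₀ A)
    (a : EuclideanSpace ℝ (Fin N)) : α₀ * ‖a‖ ^ 2 ≤ A (outerSq a) := by
  have := hA.2 a
  rwa [EuclideanSpace.real_norm_sq_eq]

lemma IsEll.outer_le {L α₀ : ℝ} {A : (Fin N → Fin N → ℝ) →L[ℝ] ℝ} (hL : 0 ≤ L)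
    (hA : IsEll L α₀ A) (a : EuclideanSpace ℝ (Fin N)) : A (outerSq a) ≤ L * ‖a‖ ^ 2 :=
  (le_abs_self _).trans ((hA.1 _).trans (mul_le_mul_of_nonneg_left (norm_outerSq_le a) hL))

lemma IsEll.nonneg {L α₀ : ℝ} (hα : 0 ≤ α₀) {A : (Fin N → Fin N → ℝ) →L[ℝ] ℝ}
    (hA : IsEll L α₀ A) {M : Fin N → Fin N → ℝ} (hs : ∀ i j, M i j = M j i)
    (hM : ∀ ξ, 0 ≤ quadForm M ξ) : 0 ≤ A M := by
  have hpsd : Matrix.PosSemidef (Matrix.of M) := by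
    refine Matrix.posSemidef_iff_dotProduct_mulVec.2 ⟨?_, fun ξ => ?_⟩
    · ext i j; simp [hs i j]
    · have := hM (WithLp.toLp 2 ξ)
      simp only [quadForm] at this
      simp only [dotProduct, Matrix.mulVec, Finset.mul_sum, star_trivial, Matrix.of_apply]
      refine this.trans_eq (Finset.sum_congr rfl fun i _ => Finset.sum_congr rfl fun j _ => ?_)
      ring
  obtain ⟨m, v, hv⟩ := Matrix.posSemidef_iff_eq_sum_vecMulVec.1 hpsd
  have hM' : M = ∑ k, fun i j => v k i * v k j := by
    funext i j
    have := congrFun (congrFun hv i) j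
    simpa [Matrix.sum_apply, Matrix.vecMulVec_apply] using this
  rw [hM', map_sum]
  exact Finset.sum_nonneg fun k _ =>
    (mul_nonneg hα (Finset.sum_nonneg fun i _ => sq_nonneg _)).trans (hA.2 (v k))

/-- Lower bound for the increment of a nonlinearity which is Lipschitz in all variables and
differentiable only in the matrix variable.  Intermediate points with mixed entries need not
belong to the convex set `𝓑`, so the bound is obtained by integrating Dini derivatives along the
segment from `P₂` to `P₁`. -/
lemma increment_ge {𝓑 : Set (ℝ × EuclideanSpace ℝ (Fin N) × (Fin N → Fin N → ℝ))}
    (hopen : IsOpen 𝓑) (hconv : Convex ℝ 𝓑)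
    {G : (ℝ × EuclideanSpace ℝ (Fin N) × (Fin N → Fin N → ℝ)) → ℝ} {L α₀ : ℝ} (hL : 0 < L)
    (hlip : ∀ P ∈ 𝓑, ∀ P' ∈ 𝓑, |G P - G P'| ≤ L * ‖P - P'‖)
    {Gq : (ℝ × EuclideanSpace ℝ (Fin N) × (Fin N → Fin N → ℝ)) →
      ((Fin N → Fin N → ℝ) →L[ℝ] ℝ)}
    (hGq : ∀ v p q, (v, p, q) ∈ 𝓑 → HasFDerivAt (fun q' => G (v, p, q')) (Gq (v, p, q)) q)
    (hell : ∀ P ∈ 𝓑, ∀ ξ : Fin N → ℝ, α₀ * (∑ i, ξ i ^ 2) ≤ Gq P (fun i j => ξ i * ξ j))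
    {v₁ v₂ : ℝ} {p₁ p₂ : EuclideanSpace ℝ (Fin N)} {q₁ q₂ : Fin N → Fin N → ℝ}
    (h₁ : (v₁, p₁, q₁) ∈ 𝓑) (h₂ : (v₂, p₂, q₂) ∈ 𝓑) {c : ℝ}
    (hc : ∀ A, IsEll L α₀ A → c ≤ A (q₁ - q₂) - L * max |v₁ - v₂| ‖p₁ - p₂‖) :
    c ≤ G (v₁, p₁, q₁) - G (v₂, p₂, q₂) := by
  have hEll : ∀ v p q, (v, p, q) ∈ 𝓑 → IsEll L α₀ (Gq (v, p, q)) := by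
    intro v p q h
    refine ⟨fun M => ?_, hell _ h⟩
    have hn : ‖Gq (v, p, q)‖ ≤ L := by
      refine (hGq v p q h).le_of_lip' hL.le ?_
      have hcont : Continuous fun q' : Fin N → Fin N → ℝ => (v, p, q') := by fun_prop
      filter_upwards [hcont.continuousAt.eventually (hopen.mem_nhds h)] with q' hq'
      have := hlip _ hq' _ h
      simpa [Prod.norm_def] using this
    exact (Gq (v, p, q)).le_of_opNorm_le hn M
  set γ : ℝ → (ℝ × EuclideanSpace ℝ (Fin N) × (Fin N → Fin N → ℝ)) := fun s =>
    (v₂ + s * (v₁ - v₂), p₂ + s • (p₁ - p₂), q₂ + s • (q₁ - q₂)) with hγ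
  have hmem : ∀ s ∈ Icc (0:ℝ) 1, γ s ∈ 𝓑 := by
    intro s hs
    have := hconv h₂ h₁ (sub_nonneg.2 hs.2) hs.1 (by ring)
    convert this using 1
    simp only [hγ, Prod.smul_mk, Prod.mk_add_mk, smul_eq_mul, Prod.mk.injEq]
    refine ⟨by ring, by module, by module⟩
  have hγc : Continuous γ := by fun_prop
  have hGc : ContinuousOn G 𝓑 := by
    refine (LipschitzOnWith.of_dist_le_mul (K := ⟨L, hL.le⟩) fun P hP P' hP' => ?_).continuousOn
    rw [Real.dist_eq, dist_eq_norm]; exact hlip P hP P' hP'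
  have key := image_le_of_liminf_slope_right_le_deriv_boundary (f := fun s => - G (γ s))
    (a := 0) (b := 1) (B := fun s => - G (γ 0) + s * (-c)) (B' := fun _ => -c)
    ((hGc.comp hγc.continuousOn hmem).neg) (by simp) (by fun_prop)
    (fun x _ => by
      simpa using ((hasDerivAt_id x).mul_const (-c)).const_add (- G (γ 0)) |>.hasDerivWithinAt)
    (fun s hs r hr => ?_)
  · have := key (x := 1) ⟨zero_le_one, le_rfl⟩
    simp only [hγ, one_mul, one_smul, zero_mul, zero_smul, add_zero, add_sub_cancel] at this
    linarith
  · refine Eventually.frequently ?_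
    have hsm : γ s ∈ 𝓑 := hmem s ⟨hs.1, hs.2.le⟩
    set A := Gq (γ s)
    have hA : IsEll L α₀ A := hEll _ _ _ hsm
    have hcA := hc A hA
    -- only the matrix entry is moved along `ζ`
    set ζ : ℝ → (Fin N → Fin N → ℝ) := fun z => q₂ + z • (q₁ - q₂) with hζ
    have hζd : HasDerivAt ζ (q₁ - q₂) s := by
      have := ((hasDerivAt_id s).smul_const (q₁ - q₂)).const_add q₂
      rwa [one_smul] at this
    have hd : HasDerivAt (fun z => G ((γ s).1, (γ s).2.1, ζ z)) (A (q₁ - q₂)) s :=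
      HasFDerivAt.comp_hasDerivAt s (hGq _ _ (ζ s) hsm) hζd
    have h5 : ∀ᶠ z in 𝓝[>] s, A (q₁ - q₂) - (r + c) <
        slope (fun z => G ((γ s).1, (γ s).2.1, ζ z)) s z :=
      ((hasDerivAt_iff_tendsto_slope.1 hd).eventually
        (lt_mem_nhds (by linarith : A (q₁ - q₂) - (r + c) < A (q₁ - q₂)))).filter_mono
        (nhdsWithin_mono _ fun z hz => ne_of_gt hz)
    have hcont : Continuous fun z => ((γ s).1, (γ s).2.1, ζ z) := by fun_prop
    have h6 : ∀ᶠ z in 𝓝[>] s, ((γ s).1, (γ s).2.1, ζ z) ∈ 𝓑 :=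
      (hcont.continuousAt.eventually (hopen.mem_nhds hsm)).filter_mono nhdsWithin_le_nhds
    have h7 : ∀ᶠ z in 𝓝[>] s, z < 1 := (gt_mem_nhds hs.2).filter_mono nhdsWithin_le_nhds
    filter_upwards [h5, h6, h7, self_mem_nhdsWithin] with z h5 h6 h7 hz
    have hz' : 0 < z - s := sub_pos.2 hz
    have hzm : γ z ∈ 𝓑 := hmem z ⟨hs.1.trans (le_of_lt hz), h7.le⟩
    have h8 := (abs_le.1 (hlip _ h6 _ hzm)).2
    have h9 : ‖((γ s).1, (γ s).2.1, ζ z) - γ z‖ = (z - s) * max |v₁ - v₂| ‖p₁ - p₂‖ := by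
      have e1 : ((γ s).1, (γ s).2.1, ζ z) - γ z =
          ((s - z) * (v₁ - v₂), (s - z) • (p₁ - p₂), 0) := by
        simp only [hγ, hζ, Prod.mk_sub_mk, Prod.mk.injEq]
        refine ⟨by ring, by module, by simp⟩
      have e2 : |s - z| = z - s := by rw [abs_sub_comm, abs_of_pos hz']
      rw [e1, Prod.norm_def, Prod.norm_def]
      simp only [norm_mul, norm_smul, Real.norm_eq_abs, norm_zero, e2]
      rw [max_eq_left (by positivity : (0:ℝ) ≤ (z - s) * ‖p₁ - p₂‖),
        mul_max_of_nonneg _ _ hz'.le]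
    rw [h9] at h8
    rw [slope_def_field, lt_div_iff₀ hz'] at h5
    rw [slope_def_field, div_lt_iff₀ hz']
    have e3 : G ((γ s).1, (γ s).2.1, ζ s) = G (γ s) := rfl
    rw [e3] at h5
    nlinarith [mul_le_mul_of_nonneg_right hcA hz'.le]

/-! ### The comparison principle -/

/-- The closed half domain `{x ∈ B̄ : x·e ≥ 0}`. -/
def halfClosed (B : Set (EuclideanSpace ℝ (Fin N))) (e : EuclideanSpace ℝ (Fin N)) :
    Set (EuclideanSpace ℝ (Fin N)) := {x ∈ closure B | 0 ≤ ⟪x, e⟫}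

/-- The difference `u(x,t) - u(σ_e x, t)`. -/
def reflDiff (u : EuclideanSpace ℝ (Fin N) → ℝ → ℝ) (e x : EuclideanSpace ℝ (Fin N)) (t : ℝ) :
    ℝ := u x t - u (reflHyp e x) t

/-- `v` has a time derivative and a spatial jet at `(x, t)` and is there a strict subsolution of
every linear equation `v_t = A(D²v) + b·∇v + c v` with `A` in the elliptic class and lower-order
coefficients controlled by `L`. -/
def StrictSub (L α₀ : ℝ) (v : EuclideanSpace ℝ (Fin N) → ℝ → ℝ) (x : EuclideanSpace ℝ (Fin N))
    (t : ℝ) : Prop :=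
  ∃ (vt : ℝ) (p : EuclideanSpace ℝ (Fin N)) (Q : Fin N → Fin N → ℝ) (c : ℝ),
    HasDerivAt (fun s => v x s) vt t ∧ HasJet (fun y => v y t) x p Q ∧ vt < c ∧
    ∀ A, IsEll L α₀ A → c ≤ A Q - L * max |v x t| ‖p‖

/-- The comparison principle for the reflected differences of `u`: barriers lying below `reflDiff`
initially and negative off the open half domain stay below it, provided they are strict
subsolutions wherever they are not already known to lie below. -/
def Comparison (B : Set (EuclideanSpace ℝ (Fin N))) (L α₀ : ℝ)
    (u : EuclideanSpace ℝ (Fin N) → ℝ → ℝ) : Prop :=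
  ∀ e : EuclideanSpace ℝ (Fin N), ‖e‖ = 1 → ∀ a b : ℝ, 0 < a → ∀ v,
    ContinuousOn (fun z : EuclideanSpace ℝ (Fin N) × ℝ => v z.1 z.2)
      (halfClosed B e ×ˢ Icc a b) →
    (∀ x ∈ halfClosed B e, v x a < reflDiff u e x a) →
    (∀ x ∈ halfClosed B e, x ∉ halfDom B e → ∀ t ∈ Icc a b, v x t < 0) →
    (∀ x ∈ halfDom B e, ∀ t ∈ Ioc a b,
      v x t < reflDiff u e x t ∨ StrictSub L α₀ v x t) →
    ∀ x ∈ halfClosed B e, ∀ t ∈ Icc a b, v x t < reflDiff u e x t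

/-- A continuous function on `K × [a,b]`, positive at time `a` and not positive throughout, has a
first touching point. -/
lemma exists_first_touch {X : Type*} [TopologicalSpace X] [T2Space X] {K : Set X}
    (hK : IsCompact K) {a b : ℝ}
    {φ : X → ℝ → ℝ} (hφ : ContinuousOn (fun z : X × ℝ => φ z.1 z.2) (K ×ˢ Icc a b))
    (ha : ∀ x ∈ K, 0 < φ x a) (hneg : ∃ x ∈ K, ∃ t ∈ Icc a b, φ x t ≤ 0) :
    ∃ x ∈ K, ∃ t ∈ Ioc a b, φ x t = 0 ∧ (∀ y ∈ K, 0 ≤ φ y t) ∧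
      ∀ s ∈ Ico a t, 0 < φ x s := by
  have hKc : IsCompact (K ×ˢ Icc a b) := hK.prod isCompact_Icc
  have hS : IsCompact ((K ×ˢ Icc a b) ∩ (fun z : X × ℝ => φ z.1 z.2) ⁻¹' Iic 0) :=
    hKc.of_isClosed_subset (hφ.preimage_isClosed_of_isClosed hKc.isClosed isClosed_Iic)
      inter_subset_left
  obtain ⟨x₀, hx₀, t₀, ht₀, h₀⟩ := hneg
  obtain ⟨⟨x, t⟩, ⟨⟨hx, ht⟩, hle⟩, hmin⟩ :=
    hS.exists_isMinOn ⟨(x₀, t₀), ⟨hx₀, ht₀⟩, h₀⟩ continuous_snd.continuousOn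
  simp only at hx ht
  have hle' : φ x t ≤ 0 := hle
  have hlt : a < t := by
    rcases eq_or_lt_of_le ht.1 with h | h
    · exact absurd (ha x hx) (not_lt.2 (h ▸ hle'))
    · exact h
  have hpos : ∀ y ∈ K, ∀ s ∈ Ico a t, 0 < φ y s := by
    intro y hy s hs
    by_contra hcon
    push Not at hcon
    have h1 : t ≤ s := hmin (show (y, s) ∈ _ from ⟨⟨hy, hs.1, hs.2.le.trans ht.2⟩, hcon⟩)
    exact absurd hs.2 (not_lt.2 h1)
  have hnn : ∀ y ∈ K, 0 ≤ φ y t := by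
    intro y hy
    have hcy : ContinuousOn (fun s => φ y s) (Icc a b) :=
      hφ.comp (f := fun s : ℝ => (y, s)) (by fun_prop) fun s hs => ⟨hy, hs⟩
    have h1 : Tendsto (fun s => φ y s) (𝓝[Ico a t] t) (𝓝 (φ y t)) :=
      ((hcy t ht).mono fun s hs => ⟨hs.1, hs.2.le.trans ht.2⟩)
    have : (𝓝[Ico a t] t).NeBot := by
      rw [← mem_closure_iff_nhdsWithin_neBot, closure_Ico hlt.ne]
      exact ⟨hlt.le, le_rfl⟩
    refine ge_of_tendsto h1 ?_
    filter_upwards [self_mem_nhdsWithin] with s hs using (hpos y hy s hs).le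
  exact ⟨x, hx, t, ⟨hlt, ht.2⟩, le_antisymm hle' (hnn x hx), hnn, hpos x hx⟩

lemma IsRadialDomain.isOpen {B : Set (EuclideanSpace ℝ (Fin N))} (hB : IsRadialDomain B) :
    IsOpen B := by
  rcases hB with ⟨R, -, rfl⟩ | ⟨r, R, -, -, rfl⟩
  · exact isOpen_ball
  · exact (isOpen_lt continuous_const continuous_norm).inter
      (isOpen_lt continuous_norm continuous_const)

lemma IsRadialDomain.isBounded {B : Set (EuclideanSpace ℝ (Fin N))} (hB : IsRadialDomain B) :
    Bornology.IsBounded B := by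
  rcases hB with ⟨R, -, rfl⟩ | ⟨r, R, -, -, rfl⟩
  · exact isBounded_ball
  · exact (isBounded_ball (x := (0 : EuclideanSpace ℝ (Fin N))) (r := R)).subset
      fun x hx => by simpa using hx.2

lemma IsRadialDomain.mem_of_norm_eq {B : Set (EuclideanSpace ℝ (Fin N))} (hB : IsRadialDomain B)
    {x y : EuclideanSpace ℝ (Fin N)} (h : ‖x‖ = ‖y‖) (hx : x ∈ B) : y ∈ B := by
  rcases hB with ⟨R, -, rfl⟩ | ⟨r, R, -, -, rfl⟩
  · simp_all
  · simpa [← h] using hx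

lemma continuous_reflHyp (e : EuclideanSpace ℝ (Fin N)) : Continuous (reflHyp e) := by
  unfold reflHyp; fun_prop

lemma IsRadialDomain.refl_mem {B : Set (EuclideanSpace ℝ (Fin N))} (hB : IsRadialDomain B)
    {e x : EuclideanSpace ℝ (Fin N)} (he : ‖e‖ = 1) (hx : x ∈ B) : reflHyp e x ∈ B :=
  hB.mem_of_norm_eq (norm_reflHyp he x).symm hx

lemma IsRadialDomain.refl_mem_closure {B : Set (EuclideanSpace ℝ (Fin N))}
    (hB : IsRadialDomain B) {e x : EuclideanSpace ℝ (Fin N)} (he : ‖e‖ = 1)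
    (hx : x ∈ closure B) : reflHyp e x ∈ closure B :=
  map_mem_closure (continuous_reflHyp e) hx fun _ hy => hB.refl_mem he hy

lemma isCompact_halfClosed {B : Set (EuclideanSpace ℝ (Fin N))} (hB : IsRadialDomain B)
    (e : EuclideanSpace ℝ (Fin N)) : IsCompact (halfClosed B e) :=
  hB.isBounded.isCompact_closure.inter_right
    (isClosed_le continuous_const (by fun_prop : Continuous fun x : EuclideanSpace ℝ (Fin N) =>
      ⟪x, e⟫))

lemma isOpen_halfDom {B : Set (EuclideanSpace ℝ (Fin N))} (hB : IsRadialDomain B)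
    (e : EuclideanSpace ℝ (Fin N)) : IsOpen (halfDom B e) :=
  hB.isOpen.inter
    (isOpen_lt continuous_const (by fun_prop : Continuous fun x : EuclideanSpace ℝ (Fin N) =>
      ⟪x, e⟫))

lemma halfDom_subset (B : Set (EuclideanSpace ℝ (Fin N))) (e : EuclideanSpace ℝ (Fin N)) :
    halfDom B e ⊆ halfClosed B e := fun _ hx => ⟨subset_closure hx.1, hx.2.le⟩

lemma reflDiff_continuousOn {B : Set (EuclideanSpace ℝ (Fin N))} (hB : IsRadialDomain B)
    {u : EuclideanSpace ℝ (Fin N) → ℝ → ℝ}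
    (hu : ContinuousOn (fun p : EuclideanSpace ℝ (Fin N) × ℝ => u p.1 p.2)
      (closure B ×ˢ Ici 0))
    {e : EuclideanSpace ℝ (Fin N)} (he : ‖e‖ = 1) :
    ContinuousOn (fun p : EuclideanSpace ℝ (Fin N) × ℝ => reflDiff u e p.1 p.2)
      (closure B ×ˢ Ici 0) := by
  refine hu.sub (hu.comp (f := fun p : EuclideanSpace ℝ (Fin N) × ℝ => (reflHyp e p.1, p.2)) ?_ ?_)
  · exact (((continuous_reflHyp e).comp continuous_fst).prodMk continuous_snd).continuousOn
  · exact fun p hp => ⟨hB.refl_mem_closure he hp.1, hp.2⟩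

lemma reflDiff_boundary {B : Set (EuclideanSpace ℝ (Fin N))} (hB : IsRadialDomain B)
    {u : EuclideanSpace ℝ (Fin N) → ℝ → ℝ} {t : ℝ}
    (hbc : ∀ x ∈ frontier B, u x t = 0) {e x : EuclideanSpace ℝ (Fin N)} (he : ‖e‖ = 1)
    (hx : x ∈ halfClosed B e) (hx' : x ∉ halfDom B e) : reflDiff u e x t = 0 := by
  by_cases hxB : x ∈ B
  · have h0 : ⟪x, e⟫ = 0 := by
      by_contra h
      exact hx' ⟨hxB, lt_of_le_of_ne hx.2 (Ne.symm h)⟩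
    simp [reflDiff, reflHyp, h0]
  · have h1 : x ∈ frontier B := by
      rw [hB.isOpen.frontier_eq]; exact ⟨hx.1, hxB⟩
    have h2 : reflHyp e x ∈ frontier B := by
      rw [hB.isOpen.frontier_eq]
      exact ⟨hB.refl_mem_closure he hx.1, fun h => hxB
        (hB.mem_of_norm_eq (norm_reflHyp he x) h)⟩
    simp [reflDiff, hbc x h1, hbc _ h2]

/-- The comparison principle holds for solutions of the fully nonlinear problem: at a first
touching point the derivative tests and `increment_ge` contradict strictness. -/
lemma comparison_of_solution
    {B : Set (EuclideanSpace ℝ (Fin N))} (hB : IsRadialDomain B)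
    {𝓑 : Set (ℝ × EuclideanSpace ℝ (Fin N) × (Fin N → Fin N → ℝ))}
    (h𝓑open : IsOpen 𝓑) (h𝓑conv : Convex ℝ 𝓑)
    {F : ℝ → EuclideanSpace ℝ (Fin N) →
      (ℝ × EuclideanSpace ℝ (Fin N) × (Fin N → Fin N → ℝ)) → ℝ}
    (hF1dom : ∀ e : EuclideanSpace ℝ (Fin N), ‖e‖ = 1 → ∀ x ∈ B,
      ∀ v : ℝ, ∀ p : EuclideanSpace ℝ (Fin N), ∀ q : Fin N → Fin N → ℝ,
      (v, p, q) ∈ 𝓑 →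
      reflHyp e x ∈ B ∧ (v, reflHyp e p, matConj (reflMat e) q) ∈ 𝓑)
    (hF1sym : ∀ e : EuclideanSpace ℝ (Fin N), ‖e‖ = 1 → ∀ t ∈ Ioi (0:ℝ), ∀ x ∈ B,
      ∀ v : ℝ, ∀ p : EuclideanSpace ℝ (Fin N), ∀ q : Fin N → Fin N → ℝ,
      (v, p, q) ∈ 𝓑 →
      F t (reflHyp e x) (v, reflHyp e p, matConj (reflMat e) q) = F t x (v, p, q))
    {L : ℝ} (hL : 0 < L)
    (hF_lip : ∀ t ∈ Ici (0:ℝ), ∀ x ∈ B, ∀ P ∈ 𝓑, ∀ P' ∈ 𝓑,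
      |F t x P - F t x P'| ≤ L * ‖P - P'‖)
    {Fq : ℝ → EuclideanSpace ℝ (Fin N) →
      (ℝ × EuclideanSpace ℝ (Fin N) × (Fin N → Fin N → ℝ)) →
      ((Fin N → Fin N → ℝ) →L[ℝ] ℝ)}
    (hFq : ∀ t ∈ Ici (0:ℝ), ∀ x ∈ B,
      ∀ v : ℝ, ∀ p : EuclideanSpace ℝ (Fin N), ∀ q : Fin N → Fin N → ℝ,
      (v, p, q) ∈ 𝓑 →
      HasFDerivAt (fun q' => F t x (v, p, q')) (Fq t x (v, p, q)) q)
    {α₀ : ℝ} (hα₀ : 0 < α₀)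
    (hF4 : ∀ t ∈ Ici (0:ℝ), ∀ x ∈ B, ∀ P ∈ 𝓑, ∀ ξ : Fin N → ℝ,
      α₀ * (∑ i, ξ i ^ 2) ≤ Fq t x P (fun i j => ξ i * ξ j))
    {u : EuclideanSpace ℝ (Fin N) → ℝ → ℝ}
    {ut : EuclideanSpace ℝ (Fin N) → ℝ → ℝ}
    {Du : EuclideanSpace ℝ (Fin N) → ℝ → (EuclideanSpace ℝ (Fin N) →L[ℝ] ℝ)}
    {D2u : EuclideanSpace ℝ (Fin N) → ℝ →
      (EuclideanSpace ℝ (Fin N) →L[ℝ] EuclideanSpace ℝ (Fin N) →L[ℝ] ℝ)}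
    (hu_cont : ContinuousOn (fun p : EuclideanSpace ℝ (Fin N) × ℝ => u p.1 p.2)
      (closure B ×ˢ Ici 0))
    (hut : ∀ x ∈ B, ∀ t ∈ Ioi (0:ℝ), HasDerivAt (fun s => u x s) (ut x t) t)
    (hDu : ∀ x ∈ B, ∀ t ∈ Ioi (0:ℝ), HasFDerivAt (fun y => u y t) (Du x t) x)
    (hD2u : ∀ x ∈ B, ∀ t ∈ Ioi (0:ℝ), HasFDerivAt (fun y => Du y t) (D2u x t) x)
    (hdom : ∀ x ∈ B, ∀ t ∈ Ioi (0:ℝ),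
      (u x t, gradVec (Du x t), hessMat (D2u x t)) ∈ 𝓑)
    (hPDE : ∀ x ∈ B, ∀ t ∈ Ioi (0:ℝ),
      ut x t = F t x (u x t, gradVec (Du x t), hessMat (D2u x t)))
    (hbc : ∀ x ∈ frontier B, ∀ t ∈ Ioi (0:ℝ), u x t = 0) :
    Comparison B L α₀ u := by
  intro e he a b ha v hv hva hvb hsub
  by_contra hcon
  push Not at hcon
  obtain ⟨x₀, hx₀, t₀, ht₀, h₀⟩ := hcon
  have hIcc : ∀ t ∈ Icc a b, t ∈ Ici (0:ℝ) := fun t ht => ha.le.trans ht.1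
  have hwc := (reflDiff_continuousOn hB hu_cont he).mono
    (prod_mono (fun x hx => hx.1 : halfClosed B e ⊆ closure B) hIcc)
  obtain ⟨x, hx, t, ht, hzero, hnn, hpos⟩ := exists_first_touch
    (φ := fun x t => reflDiff u e x t - v x t) (isCompact_halfClosed hB e) (hwc.sub hv)
    (fun x hx => sub_pos.2 (hva x hx)) ⟨x₀, hx₀, t₀, ht₀, sub_nonpos.2 h₀⟩
  have ht0 : t ∈ Ioi (0:ℝ) := ha.trans ht.1
  have ht0' : t ∈ Ici (0:ℝ) := (ha.trans ht.1).le
  have hxd : x ∈ halfDom B e := by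
    by_contra hx'
    have h1 := reflDiff_boundary hB (fun y hy => hbc y hy t ht0) he hx hx'
    have h2 := hvb x hx hx' t ⟨ht.1.le, ht.2⟩
    linarith
  rcases hsub x hxd t ht with h | ⟨vt, p, Q, c, hvt, hjet, hvtc, hA⟩
  · linarith
  have hxB := hxd.1
  have hσB := hB.refl_mem he hxB
  have hju : ∀ y ∈ B, HasJet (fun z => u z t) y (gradVec (Du y t)) (hessMat (D2u y t)) := by
    intro y hy
    refine HasJet.of_hasFDerivAt (D1 := fun z => Du z t) ?_ (hD2u y hy t ht0)
    filter_upwards [hB.isOpen.mem_nhds hy] with z hz using hDu z hz t ht0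
  set p₁ := gradVec (Du x t)
  set q₁ := hessMat (D2u x t)
  set p₂ := reflHyp e (gradVec (Du (reflHyp e x) t))
  set q₂ := matConj (reflMat e) (hessMat (D2u (reflHyp e x) t))
  have hj2 : HasJet (fun z => u (reflHyp e z) t) x p₂ q₂ := (hju _ hσB).reflHyp
  have hmin : IsLocalMin (fun y => u y t + (-1) * u (reflHyp e y) t + (-1) * v y t) x := by
    filter_upwards [(isOpen_halfDom hB e).mem_nhds hxd] with y hy
    have := hnn y (halfDom_subset B e hy)
    simp only [reflDiff] at this hzero
    linarith
  obtain ⟨hp0, hQ0⟩ := HasJet.localMin (((hju x hxB).add (hj2.smul (-1))).add (hjet.smul (-1))) hmin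
  have hp : p₁ - p₂ = p := by
    have : p₁ - p₂ - p = 0 := by rw [← hp0]; module
    exact sub_eq_zero.1 this
  have hsymm : ∀ i j, (q₁ + (-1 : ℝ) • q₂ + (-1 : ℝ) • Q) i j =
      (q₁ + (-1 : ℝ) • q₂ + (-1 : ℝ) • Q) j i :=
    (((hju x hxB).add (hj2.smul (-1))).add (hjet.smul (-1))).1
  -- the time derivative at the touching point
  have hder : HasDerivAt (fun s => reflDiff u e x s - v x s)
      (ut x t - ut (reflHyp e x) t - vt) t :=
    ((hut x hxB t ht0).sub (hut _ hσB t ht0)).sub hvt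
  have hle : ut x t - ut (reflHyp e x) t - vt ≤ 0 := by
    have h1 := (hasDerivAt_iff_tendsto_slope.1 hder).mono_left
      (nhdsWithin_mono t (fun s hs => ne_of_lt hs : Iio t ⊆ {t}ᶜ))
    refine le_of_tendsto h1 ?_
    filter_upwards [Ioo_mem_nhdsLT ht.1] with s hs
    rw [slope_def_field, hzero, sub_zero]
    exact div_nonpos_of_nonneg_of_nonpos (hpos s ⟨hs.1.le, hs.2⟩).le (by linarith [hs.2])
  have hF2 : ut (reflHyp e x) t = F t x (u (reflHyp e x) t, p₂, q₂) := by
    rw [hPDE _ hσB t ht0, ← hF1sym e he t ht0 _ hσB _ _ _ (hdom _ hσB t ht0),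
      reflHyp_reflHyp he]
  have hinc := increment_ge h𝓑open h𝓑conv (G := F t x) (Gq := Fq t x) (c := c) hL
    (hF_lip t ht0' x hxB) (hFq t ht0' x hxB) (hF4 t ht0' x hxB)
    (hdom x hxB t ht0) (hF1dom e he _ hσB _ _ _ (hdom _ hσB t ht0)).2 (fun A hEll => by
      have h1 := hA A hEll
      have h2 := hEll.nonneg hα₀.le hsymm hQ0
      have h3 : q₁ - q₂ = (q₁ + (-1 : ℝ) • q₂ + (-1 : ℝ) • Q) + Q := by module
      have h4 : u x t - u (reflHyp e x) t = v x t := by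
        simp only [reflDiff] at hzero; linarith
      change c ≤ A (q₁ - q₂) - L * max |u x t - u (reflHyp e x) t| ‖p₁ - p₂‖
      rw [h4, hp, h3, map_add]
      linarith)
  rw [hF2, hPDE x hxB t ht0] at hle
  linarith

/-! ### Boundary-defining functions and static barriers -/

/-- Data of a defining function `q` of the domain `B`: it is positive in `B`, vanishes on the
boundary, has radial gradient `a(x) x`, bounded derivatives, and its gradient does not degenerate
where `q` is small. -/
structure DefiningData (B : Set (EuclideanSpace ℝ (Fin N))) (q a : EuclideanSpace ℝ (Fin N) → ℝ)
    (Q : EuclideanSpace ℝ (Fin N) → Fin N → Fin N → ℝ) (C c k : ℝ) : Prop where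
  hC : 0 < C
  hc : 0 < c
  hc1 : c ≤ 1
  hk : 0 < k
  cont : Continuous q
  pos : ∀ x ∈ B, 0 < q x
  zero : ∀ x ∈ closure B, x ∉ B → q x = 0
  jet : ∀ x ∈ B, HasJet q x (a x • x) (Q x)
  ha : ∀ x ∈ B, |a x| ≤ C
  hp : ∀ x ∈ B, ‖a x • x‖ ≤ C
  hQ : ∀ x ∈ B, ‖Q x‖ ≤ C
  grad : ∀ x ∈ B, c - k * q x ≤ ‖a x • x‖ ^ 2

lemma exists_definingData {B : Set (EuclideanSpace ℝ (Fin N))} (hB : IsRadialDomain B) :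
    ∃ q a Q C c k, DefiningData B q a Q C c k := by
  rcases hB with ⟨R, hR, rfl⟩ | ⟨r, R, hr, hrR, rfl⟩
  · refine ⟨fun x => R ^ 2 - ‖x‖ ^ 2, fun _ => -2, fun _ => (-2 : ℝ) • idMat,
      2 + 2 * R, min 1 (4 * R ^ 2), 4, by positivity, by positivity, min_le_left _ _, by norm_num,
      by fun_prop, ?_, ?_, ?_, ?_, ?_, ?_, ?_⟩
    · intro x hx
      have hx' : ‖x‖ < R := by simpa using hx
      nlinarith [norm_nonneg x]
    · intro x hx hx'
      have h1 : ‖x‖ ≤ R := by simpa using closure_ball_subset_closedBall hx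
      have h2 : R ≤ ‖x‖ := by simpa using hx'
      simp [le_antisymm h1 h2]
    · intro x _
      have := (HasJet.const (R ^ 2) x).add ((HasJet.dist_sq 0 x).smul (-1))
      convert this using 1
      · funext y; simp; ring
      · simp only [sub_zero]; module
      · module
    · intro x _; norm_num; linarith
    · intro x hx
      have hx' : ‖x‖ < R := by simpa using hx
      rw [norm_smul]; norm_num; linarith
    · intro x _
      rw [norm_smul]; norm_num
      linarith [norm_idMat_le (N := N)]
    · intro x _
      rw [norm_smul, mul_pow]
      have h := min_le_right 1 (4 * R ^ 2)
      have h2 : ‖(-2 : ℝ)‖ ^ 2 = 4 := by norm_num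
      rw [h2]; linarith
  · set P : ℝ → ℝ := fun s => (R ^ 2 - s) * (s - r ^ 2) with hP
    set P' : ℝ → ℝ := fun s => R ^ 2 + r ^ 2 - 2 * s with hP'
    have hb : ∀ x : EuclideanSpace ℝ (Fin N), x ∈ {x : EuclideanSpace ℝ (Fin N) |
        r < ‖x‖ ∧ ‖x‖ < R} → |P' (‖x‖ ^ 2)| ≤ 2 * R ^ 2 := by
      intro x hx
      have h1 : ‖x‖ ^ 2 ≤ R ^ 2 := by nlinarith [hx.2, norm_nonneg x]
      have h2 : 0 ≤ ‖x‖ ^ 2 := by positivity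
      have h3 : r ^ 2 ≤ R ^ 2 := by nlinarith
      rw [abs_le]; constructor <;> simp only [hP'] <;> nlinarith
    have hR : 0 < R := hr.trans hrR
    have hd : 0 < R ^ 2 - r ^ 2 := by nlinarith
    refine ⟨fun x => P (‖x‖ ^ 2), fun x => 2 * P' (‖x‖ ^ 2),
      fun x => P' (‖x‖ ^ 2) • ((2 : ℝ) • idMat) + (-2 : ℝ) • outerSq ((2 : ℝ) • x),
      4 * R ^ 2 + 4 * R ^ 3 + 8 * R ^ 2 + 4 * R ^ 2, min 1 (4 * r ^ 2 * (R ^ 2 - r ^ 2) ^ 2),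
      16 * r ^ 2, by positivity, by positivity, min_le_left _ _, by positivity,
      by simp only [hP]; fun_prop, ?_, ?_, ?_, ?_, ?_, ?_, ?_⟩
    · intro x hx
      have h1 : 0 < R ^ 2 - ‖x‖ ^ 2 := by nlinarith [hx.2, norm_nonneg x]
      have h2 : 0 < ‖x‖ ^ 2 - r ^ 2 := by nlinarith [hx.1, norm_nonneg x]
      exact mul_pos h1 h2
    · intro x hx hx'
      have hcl : IsClosed {x : EuclideanSpace ℝ (Fin N) | r ≤ ‖x‖ ∧ ‖x‖ ≤ R} :=
        (isClosed_le continuous_const continuous_norm).inter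
          (isClosed_le continuous_norm continuous_const)
      have hsub : {x : EuclideanSpace ℝ (Fin N) | r < ‖x‖ ∧ ‖x‖ < R} ⊆
          {x : EuclideanSpace ℝ (Fin N) | r ≤ ‖x‖ ∧ ‖x‖ ≤ R} := fun y hy => ⟨hy.1.le, hy.2.le⟩
      have h1 := closure_minimal hsub hcl hx
      have h2 : ‖x‖ = r ∨ ‖x‖ = R := by
        by_contra h
        push Not at h
        exact hx' ⟨lt_of_le_of_ne h1.1 h.1.symm, lt_of_le_of_ne h1.2 h.2⟩
      rcases h2 with h | h <;> simp [hP, h]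
    · intro x _
      have h1 : ∀ s, HasDerivAt P (P' s) s := fun s => by
        have := ((hasDerivAt_id s).const_sub (R ^ 2)).mul ((hasDerivAt_id s).sub_const (r ^ 2))
        refine this.congr_deriv ?_
        simp only [hP', id]; ring
      have h2 : ∀ s, HasDerivAt P' (-2) s := fun s => by
        have := ((hasDerivAt_id s).const_mul 2).const_sub (R ^ 2 + r ^ 2)
        exact this.congr_deriv (by norm_num)
      have := (HasJet.dist_sq 0 x).comp (Eventually.of_forall h1) (h2 _)
      simp only [sub_zero] at this
      convert this using 1
      rw [smul_smul, mul_comm]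
    · intro x hx
      rw [abs_mul, abs_two]
      nlinarith [hb x hx, pow_pos hR 3, pow_pos hR 2]
    · intro x hx
      rw [norm_smul, norm_mul, Real.norm_eq_abs (P' _)]
      have h1 := mul_le_mul (hb x hx) hx.2.le (norm_nonneg x) (by positivity)
      norm_num
      nlinarith [pow_pos hR 3, pow_pos hR 2]
    · intro x hx
      refine (norm_add_le _ _).trans ?_
      have h1 : ‖outerSq ((2 : ℝ) • x)‖ ≤ 4 * R ^ 2 := by
        refine (norm_outerSq_le _).trans ?_
        rw [norm_smul, mul_pow]; norm_num
        nlinarith [hx.2, norm_nonneg x]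
      have h2 : |P' (‖x‖ ^ 2)| * ‖(idMat : Fin N → Fin N → ℝ)‖ ≤ 2 * R ^ 2 * 1 :=
        mul_le_mul (hb x hx) norm_idMat_le (norm_nonneg _) (by positivity)
      rw [norm_smul, norm_smul, norm_smul, Real.norm_eq_abs (P' _)]
      norm_num
      nlinarith [pow_pos hR 3, pow_pos hR 2]
    · intro x hx
      rw [norm_smul, mul_pow, Real.norm_eq_abs, sq_abs]
      have h1 := min_le_right 1 (4 * r ^ 2 * (R ^ 2 - r ^ 2) ^ 2)
      have h2 : P' (‖x‖ ^ 2) ^ 2 = (R ^ 2 - r ^ 2) ^ 2 - 4 * P (‖x‖ ^ 2) := by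
        simp only [hP, hP']; ring
      have h3 : r ^ 2 ≤ ‖x‖ ^ 2 := by nlinarith [hx.1, norm_nonneg x]
      have h4 : r ^ 2 * P' (‖x‖ ^ 2) ^ 2 ≤ ‖x‖ ^ 2 * P' (‖x‖ ^ 2) ^ 2 :=
        mul_le_mul_of_nonneg_right h3 (sq_nonneg _)
      have h5 : r ^ 2 * P' (‖x‖ ^ 2) ^ 2 =
          r ^ 2 * ((R ^ 2 - r ^ 2) ^ 2 - 4 * P (‖x‖ ^ 2)) := by rw [h2]
      nlinarith

/-- The function `((x·e) q(x))ᵐ`, which vanishes on the boundary of the half domain. For large `m`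
it is a subsolution up to a multiple of itself. -/
def bumpFn (q : EuclideanSpace ℝ (Fin N) → ℝ) (m : ℕ) (e x : EuclideanSpace ℝ (Fin N)) : ℝ :=
  (⟪x, e⟫ * q x) ^ m

/-- The function `3 - exp(-β x·e) - exp(-β q(x))`. For large `β` it is a strict supersolution in
a narrow neighbourhood of the boundary of the half domain. -/
def narrowFn (q : EuclideanSpace ℝ (Fin N) → ℝ) (β : ℝ) (e x : EuclideanSpace ℝ (Fin N)) : ℝ :=
  3 + (-1) * Real.exp (-β * ⟪x, e⟫) + (-1) * Real.exp (-β * q x)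

/-- The scalar inequality behind `bumpFn_est`: the gradient-squared term `A₄` absorbs the singular
terms of order `S ^ 2` and `T ^ 2`, and the term linear in `T` by completing the square. -/
lemma bump_core {L α₀ C c k K m S T n2 P qx ax A₁ A₂ A₃ A₄ : ℝ} (hL : 0 < L) (hα : 0 < α₀)
    (hcpos : 0 < c) (hmr : 1 ≤ m) (hm2 : L + 1 ≤ α₀ * m / 2)
    (hK : K = α₀ * m ^ 2 * C + m * L * C) (hTpos : 0 < T) (hTq : T * qx = 1)
    (a1 : A₁ ≤ L * 1 ^ 2) (a2 : A₂ ≤ L * n2) (a3 : -(L * C) ≤ A₃) (a4 : α₀ * P ^ 2 ≤ A₄)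
    (hPsq : P ^ 2 = m ^ 2 * (S ^ 2 + T ^ 2 * n2 + 2 * T * ax)) (ha' : -C ≤ ax)
    (hgr : c - k * qx ≤ n2) (hn2nn : 0 ≤ n2) :
    -((k + K) ^ 2 / (4 * c) + L + L ^ 2 / (2 * α₀)) ≤
      m * (-S ^ 2 * A₁ + (T * A₃ + -T ^ 2 * A₂)) + A₄ - L * (1 + P) := by
  have b1 : -S ^ 2 * A₁ ≥ -S ^ 2 * L := by
    have := mul_le_mul_of_nonneg_left a1 (sq_nonneg S); linarith
  have b2 : T * A₃ ≥ T * (-(L * C)) := mul_le_mul_of_nonneg_left a3 hTpos.le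
  have b3 : -T ^ 2 * A₂ ≥ -T ^ 2 * (L * n2) := by
    have := mul_le_mul_of_nonneg_left a2 (sq_nonneg T); linarith
  have b4 : m * (-S ^ 2 * A₁ + (T * A₃ + -T ^ 2 * A₂)) ≥
      m * (-S ^ 2 * L + (T * (-(L * C)) + -T ^ 2 * (L * n2))) :=
    mul_le_mul_of_nonneg_left (by linarith) (by linarith)
  have b5 : L * P ≤ α₀ / 2 * P ^ 2 + L ^ 2 / (2 * α₀) := by
    have : α₀ / 2 * P ^ 2 + L ^ 2 / (2 * α₀) - L * P = (α₀ * P - L) ^ 2 / (2 * α₀) := by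
      field_simp; ring
    have h0 : 0 ≤ (α₀ * P - L) ^ 2 / (2 * α₀) := by positivity
    linarith
  have b6 : P ^ 2 ≥ m ^ 2 * (S ^ 2 + T ^ 2 * n2 - 2 * C * T) := by
    rw [hPsq]
    refine mul_le_mul_of_nonneg_left ?_ (by positivity)
    have := mul_le_mul_of_nonneg_left ha' hTpos.le
    linarith
  have b7 : α₀ / 2 * P ^ 2 ≥ α₀ / 2 * (m ^ 2 * (S ^ 2 + T ^ 2 * n2 - 2 * C * T)) :=
    mul_le_mul_of_nonneg_left b6 (by positivity)
  have b8 : 1 ≤ α₀ / 2 * m ^ 2 - m * L := by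
    have : (m:ℝ) * 1 ≤ m * (α₀ * m / 2 - L) :=
      mul_le_mul_of_nonneg_left (by linarith) (by linarith)
    linarith
  have b9 : S ^ 2 + T ^ 2 * n2 ≤ (α₀ / 2 * m ^ 2 - m * L) * (S ^ 2 + T ^ 2 * n2) :=
    le_mul_of_one_le_left (by positivity) b8
  have b10 : T ^ 2 * (c - k * qx) ≤ T ^ 2 * n2 :=
    mul_le_mul_of_nonneg_left hgr (sq_nonneg T)
  have b11 : T ^ 2 * (c - k * qx) = c * T ^ 2 - k * T := by
    linear_combination (-k * T) * hTq
  have b12 : c * T ^ 2 - (k + K) * T ≥ -((k + K) ^ 2 / (4 * c)) := by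
    have : c * T ^ 2 - (k + K) * T + (k + K) ^ 2 / (4 * c) =
        (2 * c * T - (k + K)) ^ 2 / (4 * c) := by field_simp; ring
    have h0 : 0 ≤ (2 * c * T - (k + K)) ^ 2 / (4 * c) := by positivity
    linarith
  have b13 : 0 ≤ S ^ 2 := sq_nonneg S
  generalize (k + K) ^ 2 / (4 * c) = D at b12 ⊢
  generalize L ^ 2 / (2 * α₀) = D' at b5 ⊢
  rw [hK] at b12
  linarith

set_option maxHeartbeats 1000000 in
lemma bumpFn_est {B : Set (EuclideanSpace ℝ (Fin N))} {q a Q C c k}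
    (hq : DefiningData B q a Q C c k) {L α₀ : ℝ} (hL : 0 < L) (hα : 0 < α₀) :
    ∃ m : ℕ, 0 < m ∧ ∃ γ : ℝ, 0 < γ ∧ ∀ e : EuclideanSpace ℝ (Fin N), ‖e‖ = 1 →
      ∀ x ∈ halfDom B e, ∃ p M, HasJet (bumpFn q m e) x p M ∧ ∀ A, IsEll L α₀ A →
        -γ * bumpFn q m e x ≤ A M - L * max |bumpFn q m e x| ‖p‖ := by
  obtain ⟨n, hn⟩ := exists_nat_gt (2 * (L + 1) / α₀)
  set m : ℕ := n + 1
  have hmr : (1:ℝ) ≤ (m:ℝ) := by simp [m]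
  have hm2 : L + 1 ≤ α₀ * m / 2 := by
    have : 2 * (L + 1) < n * α₀ := (div_lt_iff₀ hα).1 hn
    simp only [m]; push_cast; nlinarith
  set K : ℝ := α₀ * m ^ 2 * C + m * L * C with hK
  have hCpos := hq.hC
  have hcpos := hq.hc
  have hkpos := hq.hk
  refine ⟨m, Nat.succ_pos n, (k + K) ^ 2 / (4 * c) + L + L ^ 2 / (2 * α₀), by positivity,
    fun e he x hx => ?_⟩
  have hs : 0 < ⟪x, e⟫ := hx.2
  have hxB := hx.1
  have hqx := hq.pos x hxB
  set s := ⟪x, e⟫ with hsdef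
  set p₂ := a x • x with hp₂
  have hlog : ∀ s : ℝ, 0 < s → (∀ᶠ z in 𝓝 s, HasDerivAt Real.log (z⁻¹) z) ∧
      HasDerivAt (fun z : ℝ => z⁻¹) (-(s ^ 2)⁻¹) s := fun s hs =>
    ⟨by filter_upwards [lt_mem_nhds hs] with z hz using Real.hasDerivAt_log hz.ne',
      hasDerivAt_inv hs.ne'⟩
  have j1 := (HasJet.inner_right e x).comp (hlog _ hs).1 (hlog _ hs).2
  have j2 := (hq.jet x hxB).comp (hlog _ hqx).1 (hlog _ hqx).2
  have jG := (j1.add j2).smul (m:ℝ)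
  have jE := jG.comp (h := Real.exp) (h' := Real.exp)
    (Eventually.of_forall Real.hasDerivAt_exp) (Real.hasDerivAt_exp _)
  have hev : ∀ y : EuclideanSpace ℝ (Fin N), 0 < ⟪y, e⟫ → 0 < q y →
      bumpFn q m e y = Real.exp (m * (Real.log ⟪y, e⟫ + Real.log (q y))) := by
    intro y h1 h2
    rw [bumpFn, ← Real.log_mul h1.ne' h2.ne', Real.exp_nat_mul, Real.exp_log (mul_pos h1 h2)]
  set G := Real.exp (m * (Real.log ⟪x, e⟫ + Real.log (q x))) with hGdef
  set pG := (m:ℝ) • ((⟪x, e⟫)⁻¹ • e + (q x)⁻¹ • p₂) with hpG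
  have hval := hev x hs hqx
  have hGpos : 0 < G := Real.exp_pos _
  refine ⟨_, _, jE.congr ?_, fun A hA => ?_⟩
  · have hc1 : Continuous fun y : EuclideanSpace ℝ (Fin N) => ⟪y, e⟫ := by fun_prop
    filter_upwards [hc1.continuousAt.eventually (lt_mem_nhds hs),
      hq.cont.continuousAt.eventually (lt_mem_nhds hqx)] with y h1 h2 using hev y h1 h2
  rw [hval, ← hGdef, abs_of_pos hGpos, norm_smul, Real.norm_eq_abs, abs_of_pos hGpos]
  simp only [map_add, map_smul, smul_eq_mul, map_zero, mul_zero, zero_add]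
  set S := s⁻¹ with hS
  set T := (q x)⁻¹ with hT
  have hSpos : 0 < S := inv_pos.2 hs
  have hTpos : 0 < T := inv_pos.2 hqx
  have e1 : (s ^ 2)⁻¹ = S ^ 2 := by rw [hS, inv_pow]
  have e2 : (q x ^ 2)⁻¹ = T ^ 2 := by rw [hT, inv_pow]
  have hTq : T * q x = 1 := inv_mul_cancel₀ hqx.ne'
  have hSs : S * s = 1 := inv_mul_cancel₀ hs.ne'
  rw [e1, e2]
  have a1 := hA.outer_le hL.le e
  rw [he] at a1
  have a2 := hA.outer_le hL.le p₂
  have a3 : -(L * C) ≤ A (Q x) := by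
    have := (abs_le.1 (hA.1 (Q x))).1
    nlinarith [hq.hQ x hxB]
  have a4 := hA.outer_ge pG
  set P := ‖pG‖ with hP
  set n2 := ‖p₂‖ ^ 2 with hn2
  have hPsq : P ^ 2 = m ^ 2 * (S ^ 2 + T ^ 2 * n2 + 2 * T * a x) := by
    rw [hP, hpG, norm_smul, mul_pow, norm_add_sq_real, inner_smul_left, inner_smul_right,
      norm_smul, norm_smul, he, mul_pow, mul_pow]
    have : ⟪e, p₂⟫ = a x * s := by
      rw [hp₂, inner_smul_right, real_inner_comm, hsdef]
    rw [this]
    simp only [conj_trivial, Real.norm_eq_abs, sq_abs]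
    linear_combination (2 * (m:ℝ) ^ 2 * T * a x) * hSs
  have ha' := (abs_le.1 (hq.ha x hxB)).1
  have hgr := hq.grad x hxB
  have hPnn : 0 ≤ P := norm_nonneg _
  have hmax : max G (G * P) ≤ G * (1 + P) := by
    refine max_le ?_ ?_ <;> nlinarith
  have hLmax := mul_le_mul_of_nonneg_left hmax hL.le
  have hn2nn : 0 ≤ n2 := by positivity
  have core := bump_core hL hα hcpos hmr hm2 hK hTpos hTq a1 a2 a3 a4 hPsq ha' hgr hn2nn
  have := mul_le_mul_of_nonneg_left core hGpos.le
  generalize (k + K) ^ 2 / (4 * c) + L + L ^ 2 / (2 * α₀) = D at this ⊢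
  linarith

/-- The scalar inequality behind `narrowFn_est`. -/
lemma narrow_core {L α₀ C c k β E₁ E₂ n2 qx A₁ A₂ A₃ : ℝ} (hL : 0 < L) (hα : 0 < α₀)
    (hCpos : 0 < C) (hkpos : 0 < k) (hβpos : 0 < β) (hE₁p : 0 < E₁) (hE₂p : 0 < E₂)
    (hE₂1 : E₂ ≤ 1) (hE₂q : β * (E₂ * qx) ≤ 1) (a1 : α₀ * 1 ^ 2 ≤ A₁) (a2 : α₀ * n2 ≤ A₂)
    (a3 : A₃ ≤ L * C) (hgr : c - k * qx ≤ n2) :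
    -1 * (-β * (-β * E₁) * A₁) + -1 * (-β * E₂ * A₃ + -β * (-β * E₂) * A₂) ≤
      -β ^ 2 * α₀ * (E₁ + c * E₂) + β * (L * C + α₀ * k) := by
  have b1 : β ^ 2 * E₁ * (α₀ * 1 ^ 2) ≤ β ^ 2 * E₁ * A₁ :=
    mul_le_mul_of_nonneg_left a1 (by positivity)
  have b2 : β ^ 2 * E₂ * (α₀ * n2) ≤ β ^ 2 * E₂ * A₂ :=
    mul_le_mul_of_nonneg_left a2 (by positivity)
  have b3 : β * (E₂ * A₃) ≤ β * (L * C) := by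
    refine mul_le_mul_of_nonneg_left ?_ hβpos.le
    have h1 : E₂ * A₃ ≤ E₂ * (L * C) := mul_le_mul_of_nonneg_left a3 hE₂p.le
    have h2 : E₂ * (L * C) ≤ 1 * (L * C) := mul_le_mul_of_nonneg_right hE₂1 (by positivity)
    linarith
  have b4 : β ^ 2 * E₂ * α₀ * (c - k * qx) ≤ β ^ 2 * E₂ * α₀ * n2 :=
    mul_le_mul_of_nonneg_left hgr (by positivity)
  have b5 : (β * α₀ * k) * (β * (E₂ * qx)) ≤ (β * α₀ * k) * 1 :=
    mul_le_mul_of_nonneg_left hE₂q (by positivity)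
  linarith

set_option maxHeartbeats 1000000 in
lemma narrowFn_est {B : Set (EuclideanSpace ℝ (Fin N))} {q a Q C c k}
    (hq : DefiningData B q a Q C c k) {L α₀ : ℝ} (hL : 0 < L) (hα : 0 < α₀) {γ : ℝ}
    (hγ : 0 < γ) :
    ∃ β : ℝ, 0 < β ∧ ∃ C' : ℝ, 0 < C' ∧ ∀ e : EuclideanSpace ℝ (Fin N), ‖e‖ = 1 →
      ∀ x ∈ halfDom B e, ∃ p M, HasJet (narrowFn q β e) x p M ∧ ∀ A, IsEll L α₀ A →
        A M + L * max |narrowFn q β e x| ‖p‖ ≤ C' ∧ (⟪x, e⟫ < 1 / β ∨ q x < 1 / β →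
          A M + L * max |narrowFn q β e x| ‖p‖ ≤ -γ) := by
  have hCpos := hq.hC
  have hcpos := hq.hc
  have hkpos := hq.hk
  set K : ℝ := L * C + α₀ * k + L * (1 + C) with hK
  set ι : ℝ := Real.exp (-1) with hι
  have hιpos : 0 < ι := Real.exp_pos _
  set β : ℝ := 1 + (K + 3 * L + γ) / (α₀ * c * ι) with hβ
  have hKpos : 0 < K := by positivity
  have hβ1 : 1 ≤ β := by
    have : 0 ≤ (K + 3 * L + γ) / (α₀ * c * ι) := by positivity
    linarith
  have hβ2 : K + 3 * L + γ ≤ β * (α₀ * c * ι) := by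
    have h0 : 0 < α₀ * c * ι := by positivity
    have : (K + 3 * L + γ) / (α₀ * c * ι) ≤ β := by linarith
    exact (div_le_iff₀ h0).1 this
  have hβpos : 0 < β := by linarith
  refine ⟨β, hβpos, K * β + 3 * L, by positivity, fun e he x hx => ?_⟩
  have hs : 0 < ⟪x, e⟫ := hx.2
  have hxB := hx.1
  have hqx := hq.pos x hxB
  set s := ⟪x, e⟫ with hsdef
  set p₂ := a x • x with hp₂
  have hexp : ∀ z : ℝ, HasDerivAt (fun y => Real.exp (-β * y)) (-β * Real.exp (-β * z)) z :=
    fun z => by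
      have := ((hasDerivAt_id z).const_mul (-β)).exp
      refine this.congr_deriv ?_
      simp only [id]; ring
  have hexp2 : ∀ z : ℝ, HasDerivAt (fun y => -β * Real.exp (-β * y))
      (-β * (-β * Real.exp (-β * z))) z := fun z => (hexp z).const_mul (-β)
  have j1 := (HasJet.inner_right e x).comp (Eventually.of_forall hexp) (hexp2 _)
  have j2 := (hq.jet x hxB).comp (Eventually.of_forall hexp) (hexp2 _)
  refine ⟨_, _, ((HasJet.const 3 x).add (j1.smul (-1))).add (j2.smul (-1)), fun A hA => ?_⟩
  simp only [map_add, map_smul, smul_eq_mul, map_zero, mul_zero, zero_add]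
  rw [show narrowFn q β e x = 3 + (-1) * Real.exp (-β * s) + (-1) * Real.exp (-β * q x) from rfl]
  set E₁ := Real.exp (-β * s) with hE₁
  set E₂ := Real.exp (-β * q x) with hE₂
  have hE₁p : 0 < E₁ := Real.exp_pos _
  have hE₂p : 0 < E₂ := Real.exp_pos _
  have hE₁1 : E₁ ≤ 1 := Real.exp_le_one_iff.2 (by nlinarith)
  have hE₂1 : E₂ ≤ 1 := Real.exp_le_one_iff.2 (by nlinarith)
  have hE₂q : β * (E₂ * q x) ≤ 1 := by
    have h1 := Real.add_one_le_exp (β * q x)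
    have h2 : E₂ * Real.exp (β * q x) = 1 := by
      rw [hE₂, ← Real.exp_add]; simp
    nlinarith
  have a1 := hA.outer_ge e
  rw [he] at a1
  have a2 := hA.outer_ge p₂
  have a3 : A (Q x) ≤ L * C := by
    have := (abs_le.1 (hA.1 (Q x))).2
    nlinarith [hq.hQ x hxB]
  have hgr := hq.grad x hxB
  set n2 := ‖p₂‖ ^ 2 with hn2
  have hnorm : ‖(-1 : ℝ) • (-β * E₁) • e + (-1 : ℝ) • (-β * E₂) • p₂‖ ≤ β * (1 + C) := by
    refine (norm_add_le _ _).trans ?_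
    rw [norm_smul, norm_smul, norm_smul, norm_smul, he]
    simp only [norm_mul, norm_neg, Real.norm_eq_abs, abs_of_pos hβpos, abs_of_pos hE₁p,
      abs_of_pos hE₂p, abs_one, one_mul, mul_one]
    have h1 := hq.hp x hxB
    have h2 : E₂ * ‖p₂‖ ≤ 1 * C := mul_le_mul hE₂1 h1 (norm_nonneg _) zero_le_one
    nlinarith
  have hmax : max |3 + (-1) * E₁ + (-1) * E₂|
      ‖(-1 : ℝ) • (-β * E₁) • e + (-1 : ℝ) • (-β * E₂) • p₂‖ ≤ 3 + β * (1 + C) := by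
    refine max_le ?_ (by linarith)
    rw [abs_of_pos (by linarith)]
    have : 0 ≤ β * (1 + C) := by positivity
    linarith
  have hLmax := mul_le_mul_of_nonneg_left hmax hL.le
  have main := narrow_core (c := c) hL hα hCpos hkpos hβpos hE₁p hE₂p hE₂1 hE₂q a1 a2 a3 hgr
  have total : -1 * (-β * (-β * E₁) * A (outerSq e)) +
      -1 * (-β * E₂ * A (Q x) + -β * (-β * E₂) * A (outerSq p₂)) +
      L * max |3 + (-1) * E₁ + (-1) * E₂|
        ‖(-1 : ℝ) • (-β * E₁) • e + (-1 : ℝ) • (-β * E₂) • p₂‖ ≤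
      -β ^ 2 * α₀ * (E₁ + c * E₂) + K * β + 3 * L := by
    rw [hK]; linarith
  constructor
  · refine total.trans ?_
    have : 0 ≤ β ^ 2 * α₀ * (E₁ + c * E₂) := by positivity
    linarith
  · intro hor
    refine total.trans ?_
    have h1 : c * ι ≤ E₁ + c * E₂ := by
      rcases hor with h | h
      · have : ι ≤ E₁ := Real.exp_le_exp.2 (by
          have := (lt_div_iff₀ hβpos).1 h; linarith)
        have h2 : c * ι ≤ 1 * ι := mul_le_mul_of_nonneg_right hq.hc1 hιpos.le
        have : 0 ≤ c * E₂ := by positivity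
        linarith
      · have : ι ≤ E₂ := Real.exp_le_exp.2 (by
          have := (lt_div_iff₀ hβpos).1 h; linarith)
        have := mul_le_mul_of_nonneg_left this hcpos.le
        linarith
    have h2 : β ^ 2 * α₀ * (c * ι) ≤ β ^ 2 * α₀ * (E₁ + c * E₂) :=
      mul_le_mul_of_nonneg_left h1 (by positivity)
    have h3 : β * (K + 3 * L + γ) ≤ β * (β * (α₀ * c * ι)) :=
      mul_le_mul_of_nonneg_left hβ2 hβpos.le
    have h4 : 1 * (3 * L + γ) ≤ β * (3 * L + γ) :=
      mul_le_mul_of_nonneg_right hβ1 (by positivity)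
    linarith

/-- A family of barriers `Φ e - δ ψ e`, uniform in the direction `e`: after multiplication by
`exp (-γ t)` it is a strict subsolution in the half domain, and it is negative on the boundary of
the half domain, where `Φ e` vanishes and `ψ e ≥ 1`. -/
structure StaticBarrier (B : Set (EuclideanSpace ℝ (Fin N))) (L α₀ : ℝ)
    (Φ ψ : EuclideanSpace ℝ (Fin N) → EuclideanSpace ℝ (Fin N) → ℝ) (γ δ : ℝ) : Prop where
  hγ : 0 < γ
  hδ : 0 < δ
  contΦ : Continuous fun z : EuclideanSpace ℝ (Fin N) × EuclideanSpace ℝ (Fin N) => Φ z.1 z.2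
  contψ : Continuous fun z : EuclideanSpace ℝ (Fin N) × EuclideanSpace ℝ (Fin N) => ψ z.1 z.2
  nonneg : ∀ e, ∀ x ∈ halfClosed B e, 0 ≤ Φ e x
  zero : ∀ e, ∀ x ∈ halfClosed B e, x ∉ halfDom B e → Φ e x = 0
  ge_one : ∀ e, ∀ x ∈ halfClosed B e, 1 ≤ ψ e x
  le_three : ∀ e, ∀ x ∈ halfClosed B e, ψ e x ≤ 3
  sub : ∀ e, ‖e‖ = 1 → ∀ x ∈ halfDom B e, ∃ p M η, 0 < η ∧
    HasJet (fun y => Φ e y + (-δ) * ψ e y) x p M ∧ ∀ A, IsEll L α₀ A →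
      η ≤ A M - L * max |Φ e x + (-δ) * ψ e x| ‖p‖ + γ * (Φ e x + (-δ) * ψ e x)

lemma max_abs_norm_le {E : Type*} [NormedAddCommGroup E] [NormedSpace ℝ E] (a b : ℝ) (p p' : E)
    {δ : ℝ} (hδ : 0 ≤ δ) :
    max |a + (-δ) * b| ‖p + (-δ) • p'‖ ≤ max |a| ‖p‖ + δ * max |b| ‖p'‖ := by
  refine max_le ?_ ?_
  · refine (abs_add_le _ _).trans (add_le_add (le_max_left _ _) ?_)
    rw [abs_mul, abs_neg, abs_of_nonneg hδ]
    exact mul_le_mul_of_nonneg_left (le_max_left _ _) hδ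
  · refine (norm_add_le _ _).trans (add_le_add (le_max_right _ _) ?_)
    rw [norm_smul, norm_neg, Real.norm_eq_abs, abs_of_nonneg hδ]
    exact mul_le_mul_of_nonneg_left (le_max_right _ _) hδ

lemma exists_staticBarrier {B : Set (EuclideanSpace ℝ (Fin N))} (hB : IsRadialDomain B)
    {L α₀ : ℝ} (hL : 0 < L) (hα : 0 < α₀) : ∃ Φ ψ γ δ, StaticBarrier B L α₀ Φ ψ γ δ := by
  obtain ⟨q, a, Q, C, c, k, hq⟩ := exists_definingData hB
  obtain ⟨m, hm, γ₀, hγ₀, hΦ⟩ := bumpFn_est hq hL hα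
  set γ := γ₀ + 1 with hγ
  obtain ⟨β, hβ, C', hC', hψ⟩ := narrowFn_est hq hL hα (γ := 3 * γ + 1) (by positivity)
  set cK : ℝ := (1 / β * (1 / β)) ^ m with hcK
  have hcKpos : 0 < cK := by positivity
  set δ : ℝ := cK / (2 * (C' + 3 * γ)) with hδ
  have hδpos : 0 < δ := by positivity
  have hδeq : δ * (C' + 3 * γ) = cK / 2 := by
    have : 0 < C' + 3 * γ := by positivity
    rw [hδ]; field_simp
  have hqnn : ∀ x ∈ closure B, 0 ≤ q x := fun x hx => by
    by_cases h : x ∈ B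
    · exact (hq.pos x h).le
    · exact (hq.zero x hx h).ge
  have hnn : ∀ e, ∀ x ∈ halfClosed B e, 0 ≤ bumpFn q m e x := fun e x hx =>
    pow_nonneg (mul_nonneg hx.2 (hqnn x hx.1)) m
  have hge : ∀ e, ∀ x ∈ halfClosed B e, 1 ≤ narrowFn q β e x := fun e x hx => by
    have h1 : Real.exp (-β * ⟪x, e⟫) ≤ 1 := Real.exp_le_one_iff.2 (by nlinarith [hx.2])
    have h2 : Real.exp (-β * q x) ≤ 1 := Real.exp_le_one_iff.2 (by nlinarith [hqnn x hx.1])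
    simp only [narrowFn]; linarith
  have hle : ∀ e, ∀ x ∈ halfClosed B e, narrowFn q β e x ≤ 3 := fun e x hx => by
    have h1 := Real.exp_pos (-β * ⟪x, e⟫)
    have h2 := Real.exp_pos (-β * q x)
    simp only [narrowFn]; linarith
  have hqc := hq.cont
  refine ⟨bumpFn q m, narrowFn q β, γ, δ, by positivity, hδpos, by unfold bumpFn; fun_prop,
    by unfold narrowFn; fun_prop, hnn, ?_, hge, hle, ?_⟩
  · intro e x hx hx'
    have h0 : ⟪x, e⟫ * q x = 0 := by
      by_cases h : x ∈ B
      · have : ⟪x, e⟫ = 0 := le_antisymm (not_lt.1 fun h' => hx' ⟨h, h'⟩) hx.2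
        rw [this, zero_mul]
      · rw [hq.zero x hx.1 h, mul_zero]
    rw [bumpFn, h0, zero_pow hm.ne']
  · intro e he x hx
    obtain ⟨p₁, M₁, j₁, h₁⟩ := hΦ e he x hx
    obtain ⟨p₂, M₂, j₂, h₂⟩ := hψ e he x hx
    refine ⟨_, _, min δ (cK / 2), lt_min hδpos (by positivity), j₁.add (j₂.smul (-δ)),
      fun A hA => ?_⟩
    have k₁ := h₁ A hA
    obtain ⟨k₂, k₃⟩ := h₂ A hA
    have hx' := halfDom_subset B e hx
    have n1 := hnn e x hx'
    have n3 := hle e x hx'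
    have hmx := mul_le_mul_of_nonneg_left
      (max_abs_norm_le (bumpFn q m e x) (narrowFn q β e x) p₁ p₂ hδpos.le) hL.le
    rw [map_add, map_smul, smul_eq_mul]
    set Y := A M₂ + L * max |narrowFn q β e x| ‖p₂‖ with hY
    have hγψ : γ * narrowFn q β e x ≤ γ * 3 := mul_le_mul_of_nonneg_left n3 (by positivity)
    have hYeq : δ * A M₂ + L * (δ * max |narrowFn q β e x| ‖p₂‖) = δ * Y := by rw [hY]; ring
    have hlow : bumpFn q m e x - δ * (Y + γ * narrowFn q β e x) ≤
        A M₁ + -δ * A M₂ -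
          L * max |bumpFn q m e x + -δ * narrowFn q β e x| ‖p₁ + -δ • p₂‖ +
          γ * (bumpFn q m e x + -δ * narrowFn q β e x) := by
      rw [hγ] at *; linarith
    refine le_trans ?_ hlow
    by_cases hK : ⟪x, e⟫ < 1 / β ∨ q x < 1 / β
    · have h3 : δ * (Y + γ * narrowFn q β e x) ≤ δ * (-1) :=
        mul_le_mul_of_nonneg_left (by linarith [k₃ hK]) hδpos.le
      linarith [min_le_left δ (cK / 2)]
    · push Not at hK
      have h3 : δ * (Y + γ * narrowFn q β e x) ≤ δ * (C' + 3 * γ) :=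
        mul_le_mul_of_nonneg_left (by linarith) hδpos.le
      have h4 : cK ≤ bumpFn q m e x :=
        pow_le_pow_left₀ (by positivity)
          (mul_le_mul hK.1 hK.2 (by positivity) hx.2.le) m
      linarith [min_le_right δ (cK / 2)]

lemma StaticBarrier.strictSub {B : Set (EuclideanSpace ℝ (Fin N))} {L α₀ : ℝ} {Φ ψ γ δ}
    (h : StaticBarrier B L α₀ Φ ψ γ δ) {e x : EuclideanSpace ℝ (Fin N)} (he : ‖e‖ = 1)
    (hx : x ∈ halfDom B e) {μ : ℝ} (hμ : 0 < μ) (t₀ t : ℝ) :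
    StrictSub L α₀ (fun y s => μ * Real.exp (-γ * (s - t₀)) * (Φ e y + (-δ) * ψ e y)) x t := by
  obtain ⟨p, M, η, hη, hj, hA⟩ := h.sub e he x hx
  set κ := μ * Real.exp (-γ * (t - t₀)) with hκ
  have hκpos : 0 < κ := by positivity
  set χ := Φ e x + (-δ) * ψ e x with hχ
  refine ⟨-γ * (κ * χ), κ • p, κ • M, κ * (η - γ * χ), ?_, hj.smul κ, ?_, ?_⟩
  · have h1 : HasDerivAt (fun s : ℝ => -γ * (s - t₀)) (-γ) t := by
      simpa using ((hasDerivAt_id t).sub_const t₀).const_mul (-γ)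
    refine ((h1.exp.const_mul μ).mul_const χ).congr_deriv ?_
    rw [hκ]; ring
  · have : 0 < κ * η := by positivity
    linarith
  · intro A hell
    have h1 := mul_le_mul_of_nonneg_left (hA A hell) hκpos.le
    have h2 : max |κ * χ| ‖κ • p‖ = κ * max |χ| ‖p‖ := by
      rw [abs_mul, norm_smul, Real.norm_eq_abs, abs_of_pos hκpos, mul_max_of_nonneg _ _ hκpos.le]
    rw [map_smul, smul_eq_mul, h2]
    linarith

/-! ### Propagation of positivity -/

lemma isPreconnected_halfDom {B : Set (EuclideanSpace ℝ (Fin N))} (hB : IsRadialDomain B)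
    (e : EuclideanSpace ℝ (Fin N)) : IsPreconnected (halfDom B e) := by
  have hconv : Convex ℝ {x : EuclideanSpace ℝ (Fin N) | 0 < ⟪x, e⟫} := by
    refine (convex_Ioi (0:ℝ)).is_linear_preimage (f := fun x => ⟪x, e⟫)
      ⟨fun x y => ?_, fun c x => ?_⟩
    · exact inner_add_left _ _ _
    · simp [inner_smul_left]
  rcases hB with ⟨R, -, rfl⟩ | ⟨r, R, hr, -, rfl⟩
  · exact ((convex_ball _ _).inter hconv).isPreconnected
  · have hprod : IsPreconnected (Ioo r R ×ˢ {x : EuclideanSpace ℝ (Fin N) | 0 < ⟪x, e⟫}) :=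
      isPreconnected_Ioo.prod hconv.isPreconnected
    have hne : ∀ x : EuclideanSpace ℝ (Fin N), 0 < ⟪x, e⟫ → 0 < ‖x‖ := fun x hx =>
      norm_pos_iff.2 (by rintro rfl; simp at hx)
    have himg := hprod.image (fun z => (z.1 / ‖z.2‖) • z.2) (by
      refine ContinuousOn.smul (ContinuousOn.div continuousOn_fst continuousOn_snd.norm ?_)
        continuousOn_snd
      exact fun z hz => (hne z.2 hz.2).ne')
    convert himg using 1
    ext x
    constructor
    · rintro ⟨hx, hx'⟩
      refine ⟨(‖x‖, x), ⟨hx, hx'⟩, ?_⟩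
      simp [div_self (hne x hx').ne']
    · rintro ⟨⟨s, y⟩, ⟨hs, hy⟩, rfl⟩
      have hy0 := hne y hy
      have hs0 : 0 < s := hr.trans hs.1
      have hn : ‖(s / ‖y‖) • y‖ = s := by
        rw [norm_smul, Real.norm_eq_abs, abs_of_pos (by positivity), div_mul_cancel₀ _ hy0.ne']
      refine ⟨by simpa [hn] using hs, ?_⟩
      rw [inner_smul_left]
      exact mul_pos (by simpa using by positivity) hy

/-- A small negative lower bound deteriorates at most exponentially. -/
lemma lower_bound {B : Set (EuclideanSpace ℝ (Fin N))} {L α₀ : ℝ}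
    {u : EuclideanSpace ℝ (Fin N) → ℝ → ℝ} (hcomp : Comparison B L α₀ u)
    {e : EuclideanSpace ℝ (Fin N)} (he : ‖e‖ = 1) {a b ε : ℝ} (ha : 0 < a) (hε : 0 < ε)
    (h : ∀ x ∈ halfClosed B e, -ε < reflDiff u e x a) :
    ∀ x ∈ halfClosed B e, ∀ t ∈ Icc a b,
      -(ε * Real.exp ((L + 1) * (t - a))) < reflDiff u e x t := by
  refine hcomp e he a b ha (fun _ t => -(ε * Real.exp ((L + 1) * (t - a)))) ?_ ?_ ?_ ?_
  · exact Continuous.continuousOn (by fun_prop)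
  · intro x hx; simpa using h x hx
  · intro x _ _ t _
    have : 0 < ε * Real.exp ((L + 1) * (t - a)) := by positivity
    linarith
  · intro x _ t _
    right
    have hpos : 0 < ε * Real.exp ((L + 1) * (t - a)) := by positivity
    refine ⟨-((L + 1) * (ε * Real.exp ((L + 1) * (t - a)))), 0, 0,
      -(L * (ε * Real.exp ((L + 1) * (t - a)))), ?_, HasJet.const _ _, by linarith, ?_⟩
    · have h1 : HasDerivAt (fun s : ℝ => (L + 1) * (s - a)) (L + 1) t := by
        simpa using ((hasDerivAt_id t).sub_const a).const_mul (L + 1)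
      refine ((h1.exp.const_mul ε).neg).congr_deriv ?_
      ring
    · intro A _
      rw [map_zero, norm_zero, abs_neg, abs_of_pos hpos, max_eq_left hpos.le]
      linarith

/-- The travelling bump `κ exp(-γ(t-a)) (ρ² - |x - y - (t-a)h|²)₊² - ε exp((L+1)(t-a))`. -/
def movingBump (L a κ γ ρ ε : ℝ) (y h x : EuclideanSpace ℝ (Fin N)) (t : ℝ) : ℝ :=
  κ * Real.exp (-γ * (t - a)) * (max (ρ ^ 2 - ‖x - (y + (t - a) • h)‖ ^ 2) 0) ^ 2 +
    -(ε * Real.exp ((L + 1) * (t - a)))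

lemma movingBump_strictSub {L α₀ a κ γ ρ ε : ℝ} {y h x : EuclideanSpace ℝ (Fin N)} {t : ℝ}
    (hL : 0 < L) (hα : 0 < α₀) (hκ : 0 < κ) (hρ : 0 < ρ) (hε : 0 < ε)
    (hγ : L + (4 * L + 8 * α₀ + 4 * L * ρ + 4 * ρ * ‖h‖) ^ 2 / (32 * α₀ * ρ ^ 2) ≤ γ)
    (hs : 0 < ρ ^ 2 - ‖x - (y + (t - a) • h)‖ ^ 2) :
    StrictSub L α₀ (movingBump L a κ γ ρ ε y h) x t := by
  set Y : EuclideanSpace ℝ (Fin N) := y + (t - a) • h with hY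
  set s : ℝ := ρ ^ 2 - ‖x - Y‖ ^ 2 with hsdef
  set K : ℝ := κ * Real.exp (-γ * (t - a)) with hK
  set E : ℝ := ε * Real.exp ((L + 1) * (t - a)) with hE
  have hKpos : 0 < K := by positivity
  have hEpos : 0 < E := by positivity
  set d := x - Y with hd
  have hdρ : ‖d‖ ≤ ρ := by
    have : ‖d‖ ^ 2 ≤ ρ ^ 2 := by linarith
    exact le_of_sq_le_sq this hρ.le
  set D : ℝ := 4 * L + 8 * α₀ + 4 * L * ρ + 4 * ρ * ‖h‖ with hD
  refine ⟨-γ * K * s ^ 2 + K * (4 * s * ⟪d, h⟫) - (L + 1) * E,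
    K • ((2 * s) • ((0 : EuclideanSpace ℝ (Fin N)) + (-1 : ℝ) • ((2:ℝ) • d))) + 0,
    K • ((2 * s) • ((0 : Fin N → Fin N → ℝ) + (-1 : ℝ) • ((2:ℝ) • idMat)) +
      (2:ℝ) • outerSq ((0 : EuclideanSpace ℝ (Fin N)) + (-1 : ℝ) • ((2:ℝ) • d))) + 0,
    K * (-4 * s * L + 8 * α₀ * (ρ ^ 2 - s)) - L * (K * s ^ 2 + E + 4 * K * s * ρ),
    ?_, ?_, ?_, ?_⟩
  · have hm : HasDerivAt (fun τ : ℝ => x - (y + (τ - a) • h)) (-h) t := by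
      have := ((((hasDerivAt_id t).sub_const a).smul_const h).const_add y).const_sub x
      simpa using this
    have hσ : HasDerivAt (fun τ : ℝ => ρ ^ 2 - ‖x - (y + (τ - a) • h)‖ ^ 2) (2 * ⟪d, h⟫) t := by
      refine (hm.norm_sq.const_sub (ρ ^ 2)).congr_deriv ?_
      rw [inner_neg_right]; ring
    have hev : ∀ᶠ τ in 𝓝 t, 0 < ρ ^ 2 - ‖x - (y + (τ - a) • h)‖ ^ 2 :=
      hσ.continuousAt.eventually (lt_mem_nhds hs)
    have h1 : HasDerivAt (fun s : ℝ => -γ * (s - a)) (-γ) t := by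
      simpa using ((hasDerivAt_id t).sub_const a).const_mul (-γ)
    have h2 : HasDerivAt (fun s : ℝ => (L + 1) * (s - a)) (L + 1) t := by
      simpa using ((hasDerivAt_id t).sub_const a).const_mul (L + 1)
    have h3 := ((h1.exp.const_mul κ).mul (hσ.pow 2)).add (h2.exp.const_mul ε).neg
    refine (h3.congr_of_eventuallyEq ?_).congr_deriv ?_
    · filter_upwards [hev] with τ hτ
      simp only [movingBump, max_eq_left hτ.le]
      rfl
    · simp only [Pi.pow_apply, ← hY, ← hd, ← hsdef, Nat.cast_ofNat]
      rw [hK, hE]; ring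
  · have j := ((HasJet.const (ρ ^ 2) x).add ((HasJet.dist_sq Y x).smul (-1))).comp
      (h := fun z => z ^ 2) (h' := fun z => 2 * z) (h'' := 2)
      (Eventually.of_forall fun z => by simpa using hasDerivAt_pow 2 z)
      (by simpa using (hasDerivAt_id _).const_mul (2:ℝ))
    have hval : ρ ^ 2 + -1 * ‖x - Y‖ ^ 2 = s := by rw [hsdef]; ring
    have j' := (j.smul K).add (HasJet.const (-E) x)
    rw [hval] at j'
    refine j'.congr ?_
    have hc : Continuous fun z : EuclideanSpace ℝ (Fin N) => ρ ^ 2 - ‖z - Y‖ ^ 2 := by fun_prop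
    filter_upwards [hc.continuousAt.eventually (lt_mem_nhds hs)] with z hz
    simp only [movingBump, ← hY, ← hK, ← hE, max_eq_left hz.le]
    ring
  · have hin : ⟪d, h⟫ ≤ ρ * ‖h‖ :=
      (real_inner_le_norm d h).trans (mul_le_mul_of_nonneg_right hdρ (norm_nonneg _))
    have h1 : s * ⟪d, h⟫ ≤ s * (ρ * ‖h‖) := mul_le_mul_of_nonneg_left hin hs.le
    have h2 : (L + D ^ 2 / (32 * α₀ * ρ ^ 2)) * s ^ 2 ≤ γ * s ^ 2 :=
      mul_le_mul_of_nonneg_right hγ (sq_nonneg s)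
    have h3 : 8 * α₀ * ρ ^ 2 - D * s + D ^ 2 / (32 * α₀ * ρ ^ 2) * s ^ 2 =
        (16 * α₀ * ρ ^ 2 - D * s) ^ 2 / (32 * α₀ * ρ ^ 2) := by field_simp; ring
    have h4 : 0 ≤ (16 * α₀ * ρ ^ 2 - D * s) ^ 2 / (32 * α₀ * ρ ^ 2) := by positivity
    have h5 : D * s = 4 * L * s + 8 * α₀ * s + 4 * L * ρ * s + 4 * ρ * ‖h‖ * s := by
      rw [hD]; ring
    have h6 : -γ * s ^ 2 + 4 * s * ⟪d, h⟫ ≤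
        -4 * s * L + 8 * α₀ * (ρ ^ 2 - s) - L * s ^ 2 - 4 * L * s * ρ := by
      linarith
    have h7 := mul_le_mul_of_nonneg_left h6 hKpos.le
    linarith
  · intro A hA
    have hAid : A idMat ≤ L := by
      refine (le_abs_self _).trans ((hA.1 _).trans ?_)
      have := mul_le_mul_of_nonneg_left (norm_idMat_le (N := N)) hL.le
      linarith
    have hAo := hA.outer_ge ((0 : EuclideanSpace ℝ (Fin N)) + (-1 : ℝ) • ((2:ℝ) • d))
    have hn : ‖(0 : EuclideanSpace ℝ (Fin N)) + (-1 : ℝ) • ((2:ℝ) • d)‖ = 2 * ‖d‖ := by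
      rw [zero_add, norm_smul, norm_smul]; norm_num
    have hd2 : ‖d‖ ^ 2 = ρ ^ 2 - s := by rw [hsdef]; ring
    rw [hn, mul_pow, hd2] at hAo
    have hv : movingBump L a κ γ ρ ε y h x t = K * s ^ 2 + -E := by
      simp only [movingBump, ← hY, ← hd, ← hK, ← hE, ← hsdef, max_eq_left hs.le]
    have hmax : max |movingBump L a κ γ ρ ε y h x t|
        ‖K • ((2 * s) • ((0 : EuclideanSpace ℝ (Fin N)) + (-1 : ℝ) • ((2:ℝ) • d))) + 0‖ ≤
        K * s ^ 2 + E + 4 * K * s * ρ := by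
      have hKs : 0 ≤ K * s ^ 2 := by positivity
      have hKsr : 0 ≤ 4 * K * s * ρ := by positivity
      refine max_le ?_ ?_
      · rw [hv, abs_le]; constructor <;> linarith
      · rw [add_zero, norm_smul, norm_smul, hn, Real.norm_eq_abs, Real.norm_eq_abs,
          abs_of_pos hKpos, abs_of_pos (by positivity)]
        have : 4 * K * s * ‖d‖ ≤ 4 * K * s * ρ := mul_le_mul_of_nonneg_left hdρ (by positivity)
        linarith
    have hLmax := mul_le_mul_of_nonneg_left hmax hL.le
    have hlow : K * (-4 * s * L + 8 * α₀ * (ρ ^ 2 - s)) ≤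
        K * (-(4 * s) * A idMat +
          2 * A (outerSq ((0 : EuclideanSpace ℝ (Fin N)) + (-1 : ℝ) • ((2:ℝ) • d)))) := by
      refine mul_le_mul_of_nonneg_left ?_ hKpos.le
      have := mul_le_mul_of_nonneg_left hAid hs.le
      linarith
    simp only [map_add, map_smul, smul_eq_mul, add_zero, zero_add] at hlow hLmax ⊢
    linarith

/-- Positivity on a ball around `y₀` is transported along a segment inside the half domain, with
constants independent of the starting time `a`. -/
lemma transport_positivity {B : Set (EuclideanSpace ℝ (Fin N))} {L α₀ : ℝ}
    {u : EuclideanSpace ℝ (Fin N) → ℝ → ℝ} (hcomp : Comparison B L α₀ u) (hL : 0 < L)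
    (hα : 0 < α₀) {e : EuclideanSpace ℝ (Fin N)} (he : ‖e‖ = 1)
    {y₀ y₁ : EuclideanSpace ℝ (Fin N)} {ρ T c : ℝ} (hρ : 0 < ρ) (hT : 0 < T) (hc : 0 < c)
    (hball : ∀ s ∈ Icc (0:ℝ) 1, closedBall (y₀ + s • (y₁ - y₀)) ρ ⊆ halfDom B e) :
    ∃ c' > 0, ∃ ε > 0, ∀ a > 0, (∀ x ∈ halfClosed B e, -ε < reflDiff u e x a) →
      (∀ x ∈ ball y₀ ρ, c ≤ reflDiff u e x a) →
      ∀ x ∈ ball y₁ (ρ / 2), c' ≤ reflDiff u e x (a + T) := by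
  set h : EuclideanSpace ℝ (Fin N) := T⁻¹ • (y₁ - y₀) with hh
  set γ : ℝ := L + (4 * L + 8 * α₀ + 4 * L * ρ + 4 * ρ * ‖h‖) ^ 2 / (32 * α₀ * ρ ^ 2) with hγ
  set κ : ℝ := c / (2 * ρ ^ 4) with hκ
  have hκpos : 0 < κ := by positivity
  set c' : ℝ := κ * Real.exp (-γ * T) * ρ ^ 4 / 4 with hc'
  have hc'pos : 0 < c' := by positivity
  set ε : ℝ := c' / Real.exp ((L + 1) * T) with hε
  have hεpos : 0 < ε := by positivity
  refine ⟨c', hc'pos, ε, hεpos, fun a ha hlow hpos => ?_⟩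
  have hlb := lower_bound (b := a + T) hcomp he ha hεpos hlow
  have hcenter : ∀ t ∈ Icc a (a + T), closedBall (y₀ + (t - a) • h) ρ ⊆ halfDom B e := by
    intro t ht
    have := hball ((t - a) * T⁻¹) ⟨mul_nonneg (by linarith [ht.1]) (by positivity), by
      rw [← div_eq_mul_inv, div_le_one hT]; linarith [ht.2]⟩
    rwa [mul_smul] at this
  -- outside the moving ball the bump reduces to the exponential lower bound
  have hout : ∀ x t, ρ ^ 2 - ‖x - (y₀ + (t - a) • h)‖ ^ 2 ≤ 0 →
      movingBump L a κ γ ρ ε y₀ h x t = -(ε * Real.exp ((L + 1) * (t - a))) := by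
    intro x t hs
    simp [movingBump, max_eq_right hs]
  have hκρ : κ * ρ ^ 4 = c / 2 := by rw [hκ]; field_simp
  have key := hcomp e he a (a + T) ha (movingBump L a κ γ ρ ε y₀ h) ?_ ?_ ?_ ?_
  · intro x hx
    have hx0 : x ∈ halfDom B e := by
      have h1 := hball 1 ⟨zero_le_one, le_rfl⟩
      rw [one_smul, add_sub_cancel] at h1
      exact h1 (ball_subset_closedBall (ball_subset_ball (by linarith) hx))
    have h1 := key x (halfDom_subset B e hx0) (a + T) ⟨by linarith, le_rfl⟩
    refine le_trans ?_ h1.le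
    have hY : y₀ + (a + T - a) • h = y₁ := by
      rw [hh, add_sub_cancel_left, smul_smul, mul_inv_cancel₀ hT.ne', one_smul, add_sub_cancel]
    have hd : ‖x - y₁‖ < ρ / 2 := by rwa [mem_ball_iff_norm] at hx
    have hd2 : ‖x - y₁‖ ^ 2 ≤ (ρ / 2) ^ 2 := pow_le_pow_left₀ (norm_nonneg _) hd.le 2
    have hs : 3 / 4 * ρ ^ 2 ≤ max (ρ ^ 2 - ‖x - y₁‖ ^ 2) 0 := by
      refine le_max_of_le_left ?_; linarith
    have hs2 : (3 / 4 * ρ ^ 2) ^ 2 ≤ (max (ρ ^ 2 - ‖x - y₁‖ ^ 2) 0) ^ 2 :=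
      pow_le_pow_left₀ (by positivity) hs 2
    have hεe : ε * Real.exp ((L + 1) * T) = c' := div_mul_cancel₀ _ (Real.exp_pos _).ne'
    rw [movingBump, hY, add_sub_cancel_left, hεe]
    have h3 := mul_le_mul_of_nonneg_left hs2 (by positivity : 0 ≤ κ * Real.exp (-γ * T))
    have h4 : 0 ≤ κ * Real.exp (-γ * T) * ρ ^ 4 := by positivity
    rw [hc']
    linarith
  · refine Continuous.continuousOn ?_
    unfold movingBump; fun_prop
  · intro x hx
    by_cases hs : ρ ^ 2 - ‖x - (y₀ + (a - a) • h)‖ ^ 2 ≤ 0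
    · rw [hout x a hs]; simpa using hlow x hx
    · push Not at hs
      simp only [movingBump, max_eq_left hs.le]
      simp only [sub_self, zero_smul, add_zero, mul_zero, Real.exp_zero, mul_one] at hs ⊢
      have hx' : x ∈ ball y₀ ρ := by
        rw [mem_ball_iff_norm]
        exact lt_of_pow_lt_pow_left₀ 2 hρ.le (by linarith)
      have h1 := hpos x hx'
      have h2 : (ρ ^ 2 - ‖x - y₀‖ ^ 2) ^ 2 ≤ (ρ ^ 2) ^ 2 :=
        pow_le_pow_left₀ hs.le (by linarith [sq_nonneg ‖x - y₀‖]) 2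
      have h3 := mul_le_mul_of_nonneg_left h2 hκpos.le
      linarith
  · intro x hx hx' t ht
    rw [hout x t]
    · have : 0 < ε * Real.exp ((L + 1) * (t - a)) := by positivity
      linarith
    · by_contra hs
      push Not at hs
      refine hx' (hcenter t ht ?_)
      rw [mem_closedBall_iff_norm]
      exact le_of_sq_le_sq (by linarith) hρ.le
  · intro x hx t ht
    by_cases hs : ρ ^ 2 - ‖x - (y₀ + (t - a) • h)‖ ^ 2 ≤ 0
    · left
      rw [hout x t hs]
      exact hlb x (halfDom_subset B e hx) t ⟨ht.1.le, ht.2⟩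
    · right
      exact movingBump_strictSub hL hα hκpos hρ hεpos le_rfl (not_le.1 hs)

/-- Along the sequence of times `t n + T`, the reflected difference is eventually bounded below by
a positive constant near `x`. -/
def PosAt (u : EuclideanSpace ℝ (Fin N) → ℝ → ℝ) (e : EuclideanSpace ℝ (Fin N)) (t : ℕ → ℝ)
    (x : EuclideanSpace ℝ (Fin N)) (T : ℝ) : Prop :=
  ∃ ρ > 0, ∃ c > 0, ∀ᶠ n in atTop, ∀ y ∈ ball x ρ, c ≤ reflDiff u e y (t n + T)

lemma eventually_lower {B : Set (EuclideanSpace ℝ (Fin N))} {L α₀ : ℝ}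
    {u : EuclideanSpace ℝ (Fin N) → ℝ → ℝ} (hcomp : Comparison B L α₀ u)
    {e : EuclideanSpace ℝ (Fin N)} (he : ‖e‖ = 1)
    {t : ℕ → ℝ} (ht : Tendsto t atTop atTop)
    (hnn : ∀ ε > 0, ∀ᶠ n in atTop, ∀ x ∈ halfClosed B e, -ε < reflDiff u e x (t n))
    {T : ℝ} (hT : 0 ≤ T) {ε : ℝ} (hε : 0 < ε) :
    ∀ᶠ n in atTop, ∀ x ∈ halfClosed B e, -ε < reflDiff u e x (t n + T) := by
  have hε' : 0 < ε / Real.exp ((L + 1) * T) := by positivity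
  filter_upwards [hnn _ hε', ht.eventually_gt_atTop 0] with n h1 h2 x hx
  have := lower_bound (b := t n + T) hcomp he h2 hε' h1 x hx (t n + T) ⟨by linarith, le_rfl⟩
  rwa [add_sub_cancel_left, div_mul_cancel₀ _ (Real.exp_pos _).ne'] at this

lemma posAt_step {B : Set (EuclideanSpace ℝ (Fin N))} {L α₀ : ℝ}
    {u : EuclideanSpace ℝ (Fin N) → ℝ → ℝ} (hcomp : Comparison B L α₀ u) (hL : 0 < L)
    (hα : 0 < α₀) {e : EuclideanSpace ℝ (Fin N)} (he : ‖e‖ = 1)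
    {t : ℕ → ℝ} (ht : Tendsto t atTop atTop)
    (hnn : ∀ ε > 0, ∀ᶠ n in atTop, ∀ x ∈ halfClosed B e, -ε < reflDiff u e x (t n))
    {x y : EuclideanSpace ℝ (Fin N)} {r : ℝ} (hr : 0 < r)
    (hball : ∀ s ∈ Icc (0:ℝ) 1, closedBall (x + s • (y - x)) r ⊆ halfDom B e)
    {T S : ℝ} (hT : 0 ≤ T) (hS : 0 < S) (h : PosAt u e t x T) : PosAt u e t y (T + S) := by
  obtain ⟨ρ, hρ, c, hc, hn⟩ := h
  obtain ⟨c', hc', ε, hε, hstep⟩ := transport_positivity hcomp hL hα he (y₀ := x) (y₁ := y)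
    (lt_min hρ hr) hS hc
    fun s hs => (closedBall_subset_closedBall (min_le_right _ _)).trans (hball s hs)
  refine ⟨min ρ r / 2, by positivity, c', hc', ?_⟩
  filter_upwards [hn, eventually_lower hcomp he ht hnn hT hε, ht.eventually_gt_atTop 0]
    with n h1 h2 h3 z hz
  rw [← add_assoc]
  exact hstep (t n + T) (by linarith) h2
    (fun x hx => h1 x (ball_subset_ball (min_le_left _ _) hx)) z hz

lemma posAt_spread {B : Set (EuclideanSpace ℝ (Fin N))} (hB : IsRadialDomain B) {L α₀ : ℝ}
    {u : EuclideanSpace ℝ (Fin N) → ℝ → ℝ} (hcomp : Comparison B L α₀ u) (hL : 0 < L)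
    (hα : 0 < α₀) {e : EuclideanSpace ℝ (Fin N)} (he : ‖e‖ = 1)
    {t : ℕ → ℝ} (ht : Tendsto t atTop atTop)
    (hnn : ∀ ε > 0, ∀ᶠ n in atTop, ∀ x ∈ halfClosed B e, -ε < reflDiff u e x (t n))
    {x y : EuclideanSpace ℝ (Fin N)} (hx : x ∈ halfDom B e) (hy : y ∈ halfDom B e)
    {S : ℝ} (hS : 0 < S) (h : PosAt u e t x 0) : PosAt u e t y S := by
  have key := (isPreconnected_halfDom hB e).induction₂'
    (fun x y => ∀ T S : ℝ, 0 ≤ T → 0 < S → PosAt u e t x T → PosAt u e t y (T + S)) ?_ ?_ hx hy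
  · simpa using key 0 S le_rfl hS h
  · intro x hx
    obtain ⟨r, hr, hrB⟩ := Metric.isOpen_iff.1 (isOpen_halfDom hB e) x hx
    have hev : ∀ᶠ y in 𝓝[halfDom B e] x, y ∈ ball x (r / 2) :=
      nhdsWithin_le_nhds (ball_mem_nhds x (half_pos hr))
    filter_upwards [hev] with y hy
    have hcl : ∀ z ∈ ball x (r / 2), closedBall z (r / 2) ⊆ halfDom B e := fun z hz w hw => by
      refine hrB ?_
      rw [mem_ball] at hz ⊢
      rw [mem_closedBall] at hw
      linarith [dist_triangle w z x]
    have hx0 : x ∈ ball x (r / 2) := mem_ball_self (half_pos hr)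
    have hconv := convex_ball x (r / 2)
    exact ⟨fun T S hT hS h => posAt_step hcomp hL hα he ht hnn (half_pos hr)
        (fun s hs => hcl _ (hconv.add_smul_sub_mem hx0 hy hs)) hT hS h,
      fun T S hT hS h => posAt_step hcomp hL hα he ht hnn (half_pos hr)
        (fun s hs => hcl _ (hconv.add_smul_sub_mem hy hx0 hs)) hT hS h⟩
  · intro x y z _ _ _ h1 h2 T S hT hS h
    have := h2 (T + S / 2) (S / 2) (by linarith) (by linarith)
      (h1 T (S / 2) hT (by linarith) h)
    rwa [add_assoc, add_halves] at this

/-- Positivity is uniform on compact subsets of the half domain. -/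
lemma posAt_compact {B : Set (EuclideanSpace ℝ (Fin N))}
    {u : EuclideanSpace ℝ (Fin N) → ℝ → ℝ} {e : EuclideanSpace ℝ (Fin N)} {t : ℕ → ℝ} {T : ℝ}
    (h : ∀ x ∈ halfDom B e, PosAt u e t x T) {K : Set (EuclideanSpace ℝ (Fin N))}
    (hK : IsCompact K) (hKs : K ⊆ halfDom B e) :
    ∃ c > 0, ∀ᶠ n in atTop, ∀ y ∈ K, c ≤ reflDiff u e y (t n + T) := by
  refine hK.induction_on (p := fun K => ∃ c > 0, ∀ᶠ n in atTop, ∀ y ∈ K,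
    c ≤ reflDiff u e y (t n + T)) ⟨1, one_pos, by simp⟩ ?_ ?_ ?_
  · rintro s s' hss ⟨c, hc, h⟩
    exact ⟨c, hc, h.mono fun n hn y hy => hn y (hss hy)⟩
  · rintro s s' ⟨c, hc, h⟩ ⟨c', hc', h'⟩
    refine ⟨min c c', lt_min hc hc', ?_⟩
    filter_upwards [h, h'] with n hn hn' y hy
    rcases hy with hy | hy
    · exact (min_le_left _ _).trans (hn y hy)
    · exact (min_le_right _ _).trans (hn' y hy)
  · intro x hx
    obtain ⟨ρ, hρ, c, hc, hn⟩ := h x (hKs hx)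
    exact ⟨ball x ρ, nhdsWithin_le_nhds (ball_mem_nhds x hρ), c, hc, hn⟩

/-! ### Conclusion -/

lemma eventually_reflDiff_near {B : Set (EuclideanSpace ℝ (Fin N))} (hB : IsRadialDomain B)
    {u : EuclideanSpace ℝ (Fin N) → ℝ → ℝ} {z : EuclideanSpace ℝ (Fin N) → ℝ} {t : ℕ → ℝ}
    (hz : ∀ ε > 0, ∃ n₀ : ℕ, ∀ n ≥ n₀, ∀ x ∈ closure B, |u x (t n) - z x| ≤ ε)
    {e : EuclideanSpace ℝ (Fin N)} (he : ‖e‖ = 1) {ε : ℝ} (hε : 0 < ε) :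
    ∀ᶠ n in atTop, ∀ x ∈ closure B, |reflDiff u e x (t n) - (z x - z (reflHyp e x))| ≤ ε := by
  obtain ⟨n₀, hn₀⟩ := hz (ε / 2) (half_pos hε)
  filter_upwards [eventually_ge_atTop n₀] with n hn x hx
  have h1 := abs_le.1 (hn₀ n hn x hx)
  have h2 := abs_le.1 (hn₀ n hn _ (hB.refl_mem_closure he hx))
  rw [reflDiff, abs_le]
  constructor <;> linarith [h1.1, h1.2, h2.1, h2.2]

lemma posAt_initial {B : Set (EuclideanSpace ℝ (Fin N))} (hB : IsRadialDomain B)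
    {u : EuclideanSpace ℝ (Fin N) → ℝ → ℝ} {z : EuclideanSpace ℝ (Fin N) → ℝ} {t : ℕ → ℝ}
    (hzc : ContinuousOn z (closure B))
    (hz : ∀ ε > 0, ∃ n₀ : ℕ, ∀ n ≥ n₀, ∀ x ∈ closure B, |u x (t n) - z x| ≤ ε)
    {e x : EuclideanSpace ℝ (Fin N)} (he : ‖e‖ = 1) (hx : x ∈ halfDom B e)
    (hpos : z (reflHyp e x) < z x) : PosAt u e t x 0 := by
  have hcl : closure B ∈ 𝓝 x :=
    mem_of_superset (hB.isOpen.mem_nhds hx.1) subset_closure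
  have hcl' : closure B ∈ 𝓝 (reflHyp e x) :=
    mem_of_superset (hB.isOpen.mem_nhds (hB.refl_mem he hx.1)) subset_closure
  have hc : ContinuousAt (fun y => z y - z (reflHyp e y)) x :=
    (hzc.continuousAt hcl).sub
      ((hzc.continuousAt hcl').comp (f := reflHyp e) (continuous_reflHyp e).continuousAt)
  set ζ := z x - z (reflHyp e x) with hζ
  have hζpos : 0 < ζ := sub_pos.2 hpos
  have hev := (hc.eventually (lt_mem_nhds (by linarith : ζ / 2 < ζ))).and hcl
  obtain ⟨ρ, hρ, hball⟩ := Metric.eventually_nhds_iff_ball.1 hev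
  refine ⟨ρ, hρ, ζ / 4, by positivity, ?_⟩
  filter_upwards [eventually_reflDiff_near hB hz he (by positivity : 0 < ζ / 4)] with n hn y hy
  have h1 := (abs_le.1 (hn y (hball y hy).2)).1
  have h2 := (hball y hy).1
  rw [add_zero]
  linarith

lemma eventually_nonneg {B : Set (EuclideanSpace ℝ (Fin N))} (hB : IsRadialDomain B)
    {u : EuclideanSpace ℝ (Fin N) → ℝ → ℝ} {z : EuclideanSpace ℝ (Fin N) → ℝ} {t : ℕ → ℝ}
    (hbc : ∀ x ∈ frontier B, ∀ t ∈ Ioi (0:ℝ), u x t = 0) (ht : Tendsto t atTop atTop)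
    (hz : ∀ ε > 0, ∃ n₀ : ℕ, ∀ n ≥ n₀, ∀ x ∈ closure B, |u x (t n) - z x| ≤ ε)
    {e : EuclideanSpace ℝ (Fin N)} (he : ‖e‖ = 1)
    (hle : ∀ x ∈ halfDom B e, z (reflHyp e x) ≤ z x) :
    ∀ ε > 0, ∀ᶠ n in atTop, ∀ x ∈ halfClosed B e, -ε < reflDiff u e x (t n) := by
  intro ε hε
  filter_upwards [eventually_reflDiff_near hB hz he (half_pos hε), ht.eventually_gt_atTop 0]
    with n hn htn x hx
  by_cases hx' : x ∈ halfDom B e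
  · linarith [(abs_le.1 (hn x hx.1)).1, hle x hx']
  · rw [reflDiff_boundary hB (fun y hy => hbc y hy _ htn) he hx hx']
    linarith

/-- At some positive time the reflected difference in the direction `e` lies strictly above a
positive multiple of the static barrier. -/
lemma exists_above_barrier {B : Set (EuclideanSpace ℝ (Fin N))} (hB : IsRadialDomain B)
    {L α₀ : ℝ} {Φ ψ γ δ} (hbar : StaticBarrier B L α₀ Φ ψ γ δ)
    {u : EuclideanSpace ℝ (Fin N) → ℝ → ℝ} (hcomp : Comparison B L α₀ u) (hL : 0 < L)
    (hα : 0 < α₀) {e : EuclideanSpace ℝ (Fin N)} (he : ‖e‖ = 1)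
    {t : ℕ → ℝ} (ht : Tendsto t atTop atTop)
    (hnn : ∀ ε > 0, ∀ᶠ n in atTop, ∀ x ∈ halfClosed B e, -ε < reflDiff u e x (t n))
    {x₀ : EuclideanSpace ℝ (Fin N)} (hx₀ : x₀ ∈ halfDom B e) (hpos : PosAt u e t x₀ 0) :
    ∃ μ > 0, ∃ t₀ > 0, ∀ x ∈ halfClosed B e,
      μ * (Φ e x + (-δ) * ψ e x) < reflDiff u e x t₀ := by
  have hδ := hbar.hδ
  have hΦc : Continuous (Φ e) := hbar.contΦ.comp (continuous_const.prodMk continuous_id)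
  have hcpt := isCompact_halfClosed hB e
  obtain ⟨M, hM⟩ := hcpt.exists_bound_of_continuousOn hΦc.continuousOn
  have hK : IsCompact (halfClosed B e ∩ {x | δ / 2 ≤ Φ e x}) :=
    hcpt.inter_right (isClosed_le continuous_const hΦc)
  have hKs : halfClosed B e ∩ {x | δ / 2 ≤ Φ e x} ⊆ halfDom B e := by
    rintro x ⟨hx, hx'⟩
    by_contra hn
    have h0 := hbar.zero e x hx hn
    rw [mem_ofPred_eq, h0] at hx'
    linarith
  obtain ⟨c, hc, hev⟩ := posAt_compact
    (fun y hy => posAt_spread hB hcomp hL hα he ht hnn hx₀ hy one_pos hpos) hK hKs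
  set μ : ℝ := c / (2 * (|M| + 1)) with hμ
  have hμpos : 0 < μ := by positivity
  have hμM : μ * (|M| + 1) = c / 2 := by rw [hμ]; field_simp
  have hlow := eventually_lower hcomp he ht hnn zero_le_one (by positivity : 0 < μ * (δ / 2))
  obtain ⟨n, h1, h2, h3⟩ := (hev.and (hlow.and (ht.eventually_gt_atTop 0))).exists
  refine ⟨μ, hμpos, t n + 1, by linarith, fun x hx => ?_⟩
  have hψ := hbar.ge_one e x hx
  by_cases hxK : δ / 2 ≤ Φ e x
  · have h4 := h1 x ⟨hx, hxK⟩
    have h5 : Φ e x + (-δ) * ψ e x ≤ |M| + 1 := by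
      have := (le_abs_self _).trans ((hM x hx).trans (le_abs_self M))
      have : 0 ≤ δ * ψ e x := by positivity
      linarith
    have := mul_le_mul_of_nonneg_left h5 hμpos.le
    linarith
  · have h4 := h2 x hx
    have h5 : Φ e x + (-δ) * ψ e x ≤ -(δ / 2) := by
      have := mul_le_mul_of_nonneg_left hψ hδ.le
      linarith
    have := mul_le_mul_of_nonneg_left h5 hμpos.le
    linarith

/-- Being strictly above the barrier at a fixed time is stable under small rotations of the
direction, by compactness. -/
lemma above_barrier_stable {B : Set (EuclideanSpace ℝ (Fin N))} (hB : IsRadialDomain B)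
    {L α₀ : ℝ} {Φ ψ γ δ} (hbar : StaticBarrier B L α₀ Φ ψ γ δ)
    {u : EuclideanSpace ℝ (Fin N) → ℝ → ℝ}
    (hu : ContinuousOn (fun p : EuclideanSpace ℝ (Fin N) × ℝ => u p.1 p.2)
      (closure B ×ˢ Ici 0)) {e : EuclideanSpace ℝ (Fin N)} (he : ‖e‖ = 1) {μ t₀ : ℝ}
    (ht₀ : 0 < t₀)
    (h : ∀ x ∈ halfClosed B e, μ * (Φ e x + (-δ) * ψ e x) < reflDiff u e x t₀) :
    ∃ ε > 0, ∀ e' : EuclideanSpace ℝ (Fin N), ‖e'‖ = 1 → ‖e' - e‖ < ε →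
      ∀ x ∈ halfClosed B e', μ * (Φ e' x + (-δ) * ψ e' x) < reflDiff u e' x t₀ := by
  by_contra hcon
  push Not at hcon
  choose e' he' hclose x hx hle using fun n : ℕ => hcon (1 / ((n:ℝ) + 1)) (by positivity)
  have hlim : Tendsto e' atTop (𝓝 e) := by
    rw [tendsto_iff_norm_sub_tendsto_zero]
    exact squeeze_zero (fun _ => norm_nonneg _) (fun n => (hclose n).le)
      tendsto_one_div_add_atTop_nhds_zero_nat
  obtain ⟨x₀, hx₀, φ, hφ, hxlim⟩ := hB.isBounded.isCompact_closure.tendsto_subseq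
    (fun n => (hx n).1)
  have helim : Tendsto (e' ∘ φ) atTop (𝓝 e) := hlim.comp hφ.tendsto_atTop
  have hpair : Tendsto (fun n => (e' (φ n), x (φ n))) atTop (𝓝 (e, x₀)) :=
    helim.prodMk_nhds hxlim
  have hx₀e : x₀ ∈ halfClosed B e := by
    refine ⟨hx₀, ge_of_tendsto' (hxlim.inner helim) fun n => (hx (φ n)).2⟩
  have hu₀ : ContinuousOn (fun y => u y t₀) (closure B) :=
    hu.comp (f := fun y => (y, t₀)) (by fun_prop) fun y hy => ⟨hy, ht₀.le⟩
  have hrefl : Continuous fun z : EuclideanSpace ℝ (Fin N) × EuclideanSpace ℝ (Fin N) =>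
      reflHyp z.1 z.2 := by
    unfold reflHyp; fun_prop
  have l1 : Tendsto (fun n => u (x (φ n)) t₀) atTop (𝓝 (u x₀ t₀)) :=
    (hu₀ x₀ hx₀).tendsto.comp (tendsto_nhdsWithin_iff.2
      ⟨hxlim, Eventually.of_forall fun n => (hx (φ n)).1⟩)
  have l2 : Tendsto (fun n => u (reflHyp (e' (φ n)) (x (φ n))) t₀) atTop
      (𝓝 (u (reflHyp e x₀) t₀)) :=
    (hu₀ _ (hB.refl_mem_closure he hx₀)).tendsto.comp (tendsto_nhdsWithin_iff.2
      ⟨(hrefl.tendsto (e, x₀)).comp hpair, Eventually.of_forall fun n =>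
        hB.refl_mem_closure (he' (φ n)) (hx (φ n)).1⟩)
  have l3 : Tendsto (fun n => μ * (Φ (e' (φ n)) (x (φ n)) + (-δ) * ψ (e' (φ n)) (x (φ n)))) atTop
      (𝓝 (μ * (Φ e x₀ + (-δ) * ψ e x₀))) :=
    (((hbar.contΦ.tendsto (e, x₀)).comp hpair).add
      (((hbar.contψ.tendsto (e, x₀)).comp hpair).const_mul (-δ))).const_mul μ
  have := le_of_tendsto_of_tendsto' (l1.sub l2) l3 fun n => hle (φ n)
  exact absurd (h x₀ hx₀e) (not_lt.2 this)

/-- A direction whose reflected difference lies above the static barrier at some time belongs to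
`𝓜`, because the barrier keeps it above `-3 μ δ exp (-γ (t - t₀))` from then on. -/
lemma mem_omegaReflSet_of_above {B : Set (EuclideanSpace ℝ (Fin N))}
    {L α₀ : ℝ} {Φ ψ γ δ} (hbar : StaticBarrier B L α₀ Φ ψ γ δ)
    {u : EuclideanSpace ℝ (Fin N) → ℝ → ℝ} (hB : IsRadialDomain B) (hcomp : Comparison B L α₀ u)
    {e : EuclideanSpace ℝ (Fin N)} (he : ‖e‖ = 1) {μ t₀ : ℝ} (hμ : 0 < μ)
    (ht₀ : 0 < t₀)
    (h : ∀ x ∈ halfClosed B e, μ * (Φ e x + (-δ) * ψ e x) < reflDiff u e x t₀) :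
    e ∈ omegaReflSet B u := by
  have hδ := hbar.hδ
  have hΦc : Continuous (Φ e) := hbar.contΦ.comp (continuous_const.prodMk continuous_id)
  have hψc : Continuous (ψ e) := hbar.contψ.comp (continuous_const.prodMk continuous_id)
  have key : ∀ x ∈ halfClosed B e, ∀ t ≥ t₀,
      -(3 * μ * δ) * Real.exp (-γ * (t - t₀)) ≤ reflDiff u e x t := by
    intro x hx t ht
    have := hcomp e he t₀ t ht₀
      (fun y s => μ * Real.exp (-γ * (s - t₀)) * (Φ e y + (-δ) * ψ e y)) ?_ ?_ ?_ ?_ x hx t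
      ⟨ht, le_rfl⟩
    · refine le_trans ?_ this.le
      have h1 : -(3 * δ) ≤ Φ e x + (-δ) * ψ e x := by
        have h2 := mul_le_mul_of_nonneg_left (hbar.le_three e x hx) hδ.le
        linarith [hbar.nonneg e x hx]
      have h2 := mul_le_mul_of_nonneg_left h1
        (by positivity : 0 ≤ μ * Real.exp (-γ * (t - t₀)))
      linarith
    · exact Continuous.continuousOn (by fun_prop)
    · intro y hy; simpa using h y hy
    · intro y hy hy' s _
      have h1 : Φ e y + (-δ) * ψ e y < 0 := by
        rw [hbar.zero e y hy hy']
        have := mul_le_mul_of_nonneg_left (hbar.ge_one e y hy) hδ.le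
        linarith
      exact mul_neg_of_pos_of_neg (by positivity) h1
    · intro y hy s _
      exact Or.inr (hbar.strictSub he hy hμ t₀ s)
  refine ⟨he, fun z hz x hx => ?_⟩
  obtain ⟨-, s, hs, hconv⟩ := hz
  have l1 : Tendsto (fun n => reflDiff u e x (s n)) atTop (𝓝 (z x - z (reflHyp e x))) := by
    rw [Metric.tendsto_atTop']
    intro ε hε
    obtain ⟨n, hn⟩ := eventually_atTop.1 (eventually_reflDiff_near hB hconv he (half_pos hε))
    refine ⟨n, fun k hk => ?_⟩
    rw [Real.dist_eq]
    linarith [hn k hk.le x (subset_closure hx.1)]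
  have l2 : Tendsto (fun n => -(3 * μ * δ) * Real.exp (-γ * (s n - t₀))) atTop (𝓝 0) := by
    have h1 : Tendsto (fun n => -γ * (s n - t₀)) atTop atBot :=
      (tendsto_atTop_add_const_right atTop (-t₀) hs).const_mul_atTop_of_neg
        (neg_lt_zero.2 hbar.hγ)
    simpa using (Real.tendsto_exp_atBot.comp h1).const_mul (-(3 * μ * δ))
  have hle := le_of_tendsto_of_tendsto l2 l1 (by
    filter_upwards [hs.eventually_ge_atTop t₀] with n hn
    exact key x (halfDom_subset B e hx) (s n) hn)
  linarith

end Helpers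

/-- Lemma `lobolemab` of the paper:
under hypotheses (F1)–(F4) and (U2), if `e ∈ 𝓜` and some `z̃ ∈ ω(u)` satisfies
`z̃ − z̃ ∘ σ_e ≢ 0` on `B(e)`, then all unit vectors `e'` close enough to `e`
belong to `𝓜 = {e ∈ S : z ≥ z ∘ σ_e on B(e) for all z ∈ ω(u)}`. -/
theorem omegaReflSet_is_nbhd_of_strict_direction
    (N : ℕ) (hN : 2 ≤ N)
    (B : Set (EuclideanSpace ℝ (Fin N))) (hB : IsRadialDomain B)
    (𝓑 : Set (ℝ × EuclideanSpace ℝ (Fin N) × (Fin N → Fin N → ℝ)))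
    (h𝓑open : IsOpen 𝓑) (h𝓑conv : Convex ℝ 𝓑)
    (h𝓑zero : ((0:ℝ), (0 : EuclideanSpace ℝ (Fin N)), (0 : Fin N → Fin N → ℝ)) ∈ 𝓑)
    (F : ℝ → EuclideanSpace ℝ (Fin N) →
      (ℝ × EuclideanSpace ℝ (Fin N) × (Fin N → Fin N → ℝ)) → ℝ)
    -- (F1) reflection invariance
    (hF1dom : ∀ e : EuclideanSpace ℝ (Fin N), ‖e‖ = 1 → ∀ x ∈ B,
      ∀ v : ℝ, ∀ p : EuclideanSpace ℝ (Fin N), ∀ q : Fin N → Fin N → ℝ,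
      (v, p, q) ∈ 𝓑 →
      reflHyp e x ∈ B ∧ (v, reflHyp e p, matConj (reflMat e) q) ∈ 𝓑)
    (hF1sym : ∀ e : EuclideanSpace ℝ (Fin N), ‖e‖ = 1 → ∀ t ∈ Ioi (0:ℝ), ∀ x ∈ B,
      ∀ v : ℝ, ∀ p : EuclideanSpace ℝ (Fin N), ∀ q : Fin N → Fin N → ℝ,
      (v, p, q) ∈ 𝓑 →
      F t (reflHyp e x) (v, reflHyp e p, matConj (reflMat e) q) = F t x (v, p, q))
    -- (F2) regularity: continuity, uniform Lipschitz continuity in (u,p,q),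
    -- differentiability with respect to the matrix variable q
    (hF_cont : ContinuousOn (fun z : ℝ × EuclideanSpace ℝ (Fin N) ×
        (ℝ × EuclideanSpace ℝ (Fin N) × (Fin N → Fin N → ℝ)) => F z.1 z.2.1 z.2.2)
      (Ici 0 ×ˢ closure B ×ˢ 𝓑))
    (hF_lip : ∃ L > (0:ℝ), ∀ t ∈ Ici (0:ℝ), ∀ x ∈ B, ∀ P ∈ 𝓑, ∀ P' ∈ 𝓑,
      |F t x P - F t x P'| ≤ L * ‖P - P'‖)
    (Fq : ℝ → EuclideanSpace ℝ (Fin N) →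
      (ℝ × EuclideanSpace ℝ (Fin N) × (Fin N → Fin N → ℝ)) →
      ((Fin N → Fin N → ℝ) →L[ℝ] ℝ))
    (hFq : ∀ t ∈ Ici (0:ℝ), ∀ x ∈ B,
      ∀ v : ℝ, ∀ p : EuclideanSpace ℝ (Fin N), ∀ q : Fin N → Fin N → ℝ,
      (v, p, q) ∈ 𝓑 →
      HasFDerivAt (fun q' => F t x (v, p, q')) (Fq t x (v, p, q)) q)
    -- (F3) boundedness of F(·,·,0,0,0)
    (hF3 : ∃ C : ℝ, ∀ t ∈ Ici (0:ℝ), ∀ x ∈ B,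
      |F t x ((0:ℝ), (0 : EuclideanSpace ℝ (Fin N)), (0 : Fin N → Fin N → ℝ))| ≤ C)
    -- (F4) uniform ellipticity: ∂_{q_ij}F ξᵢξⱼ ≥ α₀ |ξ|²
    (α₀ : ℝ) (hα₀ : 0 < α₀)
    (hF4 : ∀ t ∈ Ici (0:ℝ), ∀ x ∈ B, ∀ P ∈ 𝓑, ∀ ξ : Fin N → ℝ,
      α₀ * (∑ i, ξ i ^ 2) ≤ Fq t x P (fun i j => ξ i * ξ j))
    -- the solution and its derivatives
    (u : EuclideanSpace ℝ (Fin N) → ℝ → ℝ)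
    (u₀ : EuclideanSpace ℝ (Fin N) → ℝ)
    (ut : EuclideanSpace ℝ (Fin N) → ℝ → ℝ)
    (Du : EuclideanSpace ℝ (Fin N) → ℝ → (EuclideanSpace ℝ (Fin N) →L[ℝ] ℝ))
    (D2u : EuclideanSpace ℝ (Fin N) → ℝ →
      (EuclideanSpace ℝ (Fin N) →L[ℝ] EuclideanSpace ℝ (Fin N) →L[ℝ] ℝ))
    -- u ∈ C(B̄ × [0,∞))
    (hu_cont : ContinuousOn (fun p : EuclideanSpace ℝ (Fin N) × ℝ => u p.1 p.2)
      (closure B ×ˢ Ici 0))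
    -- u ∈ C^{2,1}(B × (0,∞)): the derivatives exist and are continuous there
    (hut : ∀ x ∈ B, ∀ t ∈ Ioi (0:ℝ), HasDerivAt (fun s => u x s) (ut x t) t)
    (hDu : ∀ x ∈ B, ∀ t ∈ Ioi (0:ℝ), HasFDerivAt (fun y => u y t) (Du x t) x)
    (hD2u : ∀ x ∈ B, ∀ t ∈ Ioi (0:ℝ), HasFDerivAt (fun y => Du y t) (D2u x t) x)
    (hreg : ContinuousOn (fun p : EuclideanSpace ℝ (Fin N) × ℝ =>
      (ut p.1 p.2, Du p.1 p.2, D2u p.1 p.2)) (B ×ˢ Ioi 0))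
    -- the equation u_t = F(t,x,u,∇u,D²u) in B × (0,∞), with values in 𝓑
    (hdom : ∀ x ∈ B, ∀ t ∈ Ioi (0:ℝ),
      (u x t, gradVec (Du x t), hessMat (D2u x t)) ∈ 𝓑)
    (hPDE : ∀ x ∈ B, ∀ t ∈ Ioi (0:ℝ),
      ut x t = F t x (u x t, gradVec (Du x t), hessMat (D2u x t)))
    -- the boundary condition u = 0 on ∂B × (0,∞)
    (hbc : ∀ x ∈ frontier B, ∀ t ∈ Ioi (0:ℝ), u x t = 0)
    -- the initial condition u(·,0) = u₀
    (hinit : ∀ x ∈ closure B, u x 0 = u₀ x)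
    -- (U2): uniform boundedness
    (hU2 : ∃ C : ℝ, ∀ t ∈ Ici (0:ℝ), ∀ x ∈ closure B, |u x t| ≤ C)
    -- e ∈ 𝓜 and the strictness hypothesis
    (e : EuclideanSpace ℝ (Fin N)) (he : e ∈ omegaReflSet B u)
    (hstrict : ∃ ztilde ∈ omegaLimitSet B u,
      ∃ x ∈ halfDom B e, ztilde (reflHyp e x) ≠ ztilde x) :
    ∃ ε > (0:ℝ), ∀ e' : EuclideanSpace ℝ (Fin N), ‖e'‖ = 1 → ‖e' - e‖ < ε →
      e' ∈ omegaReflSet B u := by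
  obtain ⟨L, hL, hlip⟩ := hF_lip
  have hcomp : Comparison B L α₀ u := comparison_of_solution hB h𝓑open h𝓑conv hF1dom hF1sym hL
    hlip hFq hα₀ hF4 hu_cont hut hDu hD2u hdom hPDE hbc
  obtain ⟨Φ, ψ, γ, δ, hbar⟩ := exists_staticBarrier hB hL hα₀
  obtain ⟨z, hz, x₀, hx₀, hne⟩ := hstrict
  have hle := he.2 z hz
  obtain ⟨hzc, t, ht, hconv⟩ := hz
  have hnn := eventually_nonneg hB hbc ht hconv he.1 hle
  have hpos := posAt_initial hB hzc hconv he.1 hx₀ (lt_of_le_of_ne (hle x₀ hx₀) hne)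
  obtain ⟨μ, hμ, t₀, ht₀, habove⟩ :=
    exists_above_barrier hB hbar hcomp hL hα₀ he.1 ht hnn hx₀ hpos
  obtain ⟨ε, hε, hstable⟩ := above_barrier_stable hB hbar hu_cont he.1 ht₀ habove
  exact ⟨ε, hε, fun e' he' hclose =>
    mem_omegaReflSet_of_above hbar hB hcomp he' hμ ht₀ (hstable e' he' hclose)⟩

end
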